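/- arXiv:1312.4716 — 4 statements merged into one kernel-verified Lean document; each statement's English description precedes it below -/
import Mathlib

section
/- Let k be a positive integer, n = 2k, and let U = {λ ∈ F_{3^n} : λ^{3^k+1} = 1} be the unit circle of F_{3^n}. For every a ∈ F_{3^n} with a^{3^k - 1} = -1, there is exactly one λ ∈ U satisfying λ^{3^{n-1}} + λ^{1-3^{n-1}} + a^{3^k}·λ + a = 0 (here λ^{1-3^{n-1}} denotes λ·(λ^{3^{n-1}})^{-1}, which is well defined since λ ≠ 0). -/
/-!
Let `q = 3 ^ k`. On the unit circle `λ ^ (3 ^ (2 * k - 1))` is the cube root `m` of `λ`, so the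
equation becomes the cubic `m + m² - a m³ + a = 0` for `m` on the unit circle. The Cayley transform
`m = (s - 1) / (s + 1)` identifies the unit circle without `1` with the solutions of `s ^ q = -s`,
and in characteristic three it turns the cubic into the Artin–Schreier equation `s³ - s = -a`. That
equation has exactly one solution with `s ^ q = -s`: the difference `d` of two solutions lies in the
prime field, so that `d = d ^ q = -d`, and minus the sum of the conjugates `a ^ (3 ^ i)`,
`i < k`, is a solution by telescoping.
-/

open Finset Set

theorem pow_sq_eq_self_of_pow_add_one_eq_one {M : Type*} [Monoid M] {x : M} {q : ℕ}
    (hx : x ^ (q + 1) = 1) : x ^ q ^ 2 = x := by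
  cases q with
  | zero => simpa using hx.symm
  | succ r =>
    rw [show (r + 1) ^ 2 = (r + 1 + 1) * r + 1 by ring, pow_succ, pow_mul, hx, one_pow, one_mul]

section ArtinSchreier

variable {R : Type*} [CommRing R] (p : ℕ) [ExpChar R p]

theorem sum_range_pow_char_pow_sub_self (k : ℕ) (a : R) :
    (∑ i ∈ range k, a ^ p ^ i) ^ p - ∑ i ∈ range k, a ^ p ^ i = a ^ p ^ k - a := by
  calc (∑ i ∈ range k, a ^ p ^ i) ^ p - ∑ i ∈ range k, a ^ p ^ i
      = ∑ i ∈ range k, (a ^ p ^ (i + 1) - a ^ p ^ i) := by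
        simp only [sum_pow_char, ← pow_mul, ← pow_succ, sum_sub_distrib]
    _ = a ^ p ^ k - a := by rw [sum_range_sub (fun i ↦ a ^ p ^ i), pow_zero, pow_one]

theorem sum_range_pow_char_pow_pow_eq_neg {k : ℕ} {a : R} (ha : a ^ p ^ k = -a) :
    (∑ i ∈ range k, a ^ p ^ i) ^ p ^ k = -∑ i ∈ range k, a ^ p ^ i := by
  have conj_eq_neg (i : ℕ) : (a ^ p ^ i) ^ p ^ k = -a ^ p ^ i := by
    rw [pow_right_comm, ha, ← iterateFrobenius_def, map_neg, iterateFrobenius_def]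
  simp only [sum_pow_char_pow, conj_eq_neg, sum_neg_distrib]

theorem eq_zero_of_pow_char_eq_self_of_pow_char_pow_eq_neg [NoZeroDivisors R] (h2 : (2 : R) ≠ 0)
    {k : ℕ} {d : R} (hd : d ^ p = d) (hneg : d ^ p ^ k = -d) : d = 0 := by
  have hfix : d ^ p ^ k = d := by
    rw [← iterate_frobenius]
    exact Function.IsFixedPt.iterate (f := frobenius R p) hd k
  have two_mul_d : 2 * d = 0 := by linear_combination hneg - hfix
  exact (mul_eq_zero.mp two_mul_d).resolve_left h2

variable {F : Type*} [Field F] [ExpChar F p] {k : ℕ} {a : F}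

theorem exists_pow_char_sub_self_eq (h2 : (2 : F) ≠ 0) (ha : a ^ p ^ k = -a) :
    ∃ s : F, s ^ p ^ k = -s ∧ s ^ p - s = a := by
  set S := ∑ i ∈ range k, a ^ p ^ i
  have hS : S ^ p - S = -2 * a := by
    rw [sum_range_pow_char_pow_sub_self, ha]
    ring
  have neg_half_pow (j : ℕ) : (-2⁻¹ : F) ^ p ^ j = -2⁻¹ := by
    rw [← iterateFrobenius_def, map_neg, map_inv₀, map_ofNat]
  refine ⟨-2⁻¹ * S, ?_, ?_⟩
  · rw [mul_pow, neg_half_pow, sum_range_pow_char_pow_pow_eq_neg p ha, mul_neg]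
  · have neg_half_pow_char : (-2⁻¹ : F) ^ p = -2⁻¹ := by simpa only [pow_one] using neg_half_pow 1
    rw [mul_pow, neg_half_pow_char, ← mul_sub, hS]
    field_simp

theorem existsUnique_pow_char_sub_self_eq (h2 : (2 : F) ≠ 0) (ha : a ^ p ^ k = -a) :
    ∃! s : F, s ^ p ^ k = -s ∧ s ^ p - s = a := by
  refine existsUnique_of_exists_of_unique (exists_pow_char_sub_self_eq p h2 ha) ?_
  rintro s t ⟨hs, hsa⟩ ⟨ht, hta⟩
  refine sub_eq_zero.mp (eq_zero_of_pow_char_eq_self_of_pow_char_pow_eq_neg p (k := k) h2 ?_ ?_)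
  · rw [sub_pow_expChar]
    linear_combination hsa - hta
  · rw [sub_pow_expChar_pow, hs, ht]
    ring

end ArtinSchreier

section Cayley

theorem add_one_ne_zero_of_map_eq_neg {R : Type*} [Ring R] (h2 : (2 : R) ≠ 0) (σ : R →+* R) {s : R}
    (hs : σ s = -s) : s + 1 ≠ 0 := by
  intro h
  obtain rfl : s = -1 := eq_neg_of_add_eq_zero_left h
  rw [map_neg, map_one] at hs
  rw [neg_neg, neg_eq_iff_add_eq_zero, one_add_one_eq_two] at hs
  exact h2 hs

variable {F : Type*} [Field F]

/-- The Cayley transform `s ↦ (s - 1) / (s + 1)`, which matches the elements negated by an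
endomorphism `σ` of `F` with the elements `m ≠ 1` of its unit circle `σ m * m = 1`. -/
def cayley (s : F) : F := (s - 1) / (s + 1)

theorem map_cayley_mul_cayley (h2 : (2 : F) ≠ 0) (σ : F →+* F) {s : F} (hs : σ s = -s) :
    σ (cayley s) * cayley s = 1 := by
  have hs1 : s + 1 ≠ 0 := add_one_ne_zero_of_map_eq_neg h2 σ hs
  have hs1' : -s + 1 ≠ 0 := add_one_ne_zero_of_map_eq_neg h2 σ (by rw [map_neg, hs])
  rw [cayley, map_div₀, map_sub, map_add, map_one, hs]
  field_simp
  ring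

theorem map_one_add_div_one_sub (σ : F →+* F) {m : F} (hm : σ m * m = 1) :
    σ ((1 + m) / (1 - m)) = -((1 + m) / (1 - m)) := by
  have hm0 : m ≠ 0 := right_ne_zero_of_mul_eq_one hm
  rw [map_div₀, map_add, map_sub, map_one, eq_inv_of_mul_eq_one_left hm,
    ← mul_div_mul_right (1 + m⁻¹) (1 - m⁻¹) hm0, add_mul, sub_mul, inv_mul_cancel₀ hm0, one_mul,
    ← neg_sub 1 m, div_neg, add_comm]

theorem one_add_cayley_div_one_sub_cayley (h2 : (2 : F) ≠ 0) {s : F} (hs : s + 1 ≠ 0) :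
    (1 + cayley s) / (1 - cayley s) = s := by
  have hadd : 1 + cayley s = 2 * s / (s + 1) := by
    rw [cayley]
    field_simp
    ring
  have hsub : 1 - cayley s = 2 / (s + 1) := by
    rw [cayley]
    field_simp
    ring
  rw [hadd, hsub]
  field_simp

theorem cayley_one_add_div_one_sub (h2 : (2 : F) ≠ 0) {m : F} (hm : m ≠ 1) :
    cayley ((1 + m) / (1 - m)) = m := by
  have hm' : 1 - m ≠ 0 := sub_ne_zero.mpr hm.symm
  have hsub : (1 + m) / (1 - m) - 1 = 2 * m / (1 - m) := by
    field_simp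
    ring
  have hadd : (1 + m) / (1 - m) + 1 = 2 / (1 - m) := by
    field_simp
    ring
  rw [cayley, hsub, hadd]
  field_simp

theorem bijOn_cayley (h2 : (2 : F) ≠ 0) (σ : F →+* F) :
    BijOn cayley {s | σ s = -s} {m | σ m * m = 1 ∧ m ≠ 1} := by
  refine InvOn.bijOn (f' := fun m ↦ (1 + m) / (1 - m)) ⟨?leftInv, ?rightInv⟩ ?mapsTo ?mapsToInv
  case leftInv =>
    exact fun s hs ↦ one_add_cayley_div_one_sub_cayley h2 (add_one_ne_zero_of_map_eq_neg h2 σ hs)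
  case rightInv => exact fun m hm ↦ cayley_one_add_div_one_sub h2 hm.2
  case mapsTo =>
    intro s hs
    refine ⟨map_cayley_mul_cayley h2 σ hs, fun h ↦ h2 ?_⟩
    rw [cayley, div_eq_one_iff_eq (add_one_ne_zero_of_map_eq_neg h2 σ hs)] at h
    linear_combination -h
  case mapsToInv => exact fun m hm ↦ map_one_add_div_one_sub σ hm.1

end Cayley

section CharThree

variable {F : Type*} [Field F] [CharP F 3] {k : ℕ} {a : F}

theorem cayley_cubic_eq_zero_iff {s : F} (hs : s + 1 ≠ 0) :
    cayley s + cayley s ^ 2 - a * cayley s ^ 3 + a = 0 ↔ s ^ 3 - s = -a := by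
  have h3 : (3 : F) = 0 := CharP.ofNat_eq_zero F 3
  have hclear : cayley s + cayley s ^ 2 - a * cayley s ^ 3 + a =
      -(s ^ 3 - s + a) / (s + 1) ^ 3 := by
    simp only [cayley]
    field_simp
    linear_combination (s ^ 3 - s + a + 2 * a * s ^ 2) * h3
  rw [hclear, div_eq_zero_iff, or_iff_left (pow_ne_zero 3 hs), neg_eq_zero, eq_neg_iff_add_eq_zero]

theorem existsUnique_unitCircle_cubic_root (ha : a ^ 3 ^ k = -a) :
    ∃! m : F, m ^ (3 ^ k + 1) = 1 ∧ m + m ^ 2 - a * m ^ 3 + a = 0 := by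
  have h3 : (3 : F) = 0 := CharP.ofNat_eq_zero F 3
  have h2 : (2 : F) ≠ 0 := fun h ↦ one_ne_zero (α := F) (by linear_combination h3 - h)
  have hbij := bijOn_cayley h2 (iterateFrobenius F 3 k)
  simp only [iterateFrobenius_def, ← pow_succ] at hbij
  have hone {s : F} (hs : s ^ 3 ^ k = -s) : s + 1 ≠ 0 :=
    add_one_ne_zero_of_map_eq_neg h2 (iterateFrobenius F 3 k) hs
  have ha_neg : (-a) ^ 3 ^ k = -(-a) := by
    rw [← iterateFrobenius_def, map_neg, iterateFrobenius_def, ha]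
  obtain ⟨s, ⟨hs, hsa⟩, hs_unique⟩ := existsUnique_pow_char_sub_self_eq 3 h2 ha_neg
  refine ⟨cayley s, ⟨(hbij.mapsTo hs).1, (cayley_cubic_eq_zero_iff (hone hs)).2 hsa⟩, ?_⟩
  rintro m ⟨hmU, hm⟩
  have hm1 : m ≠ 1 := by
    rintro rfl
    exact h2 (by linear_combination hm)
  obtain ⟨t, ht, rfl⟩ := hbij.surjOn ⟨hmU, hm1⟩
  rw [hs_unique t ⟨ht, (cayley_cubic_eq_zero_iff (hone ht)).1 hm⟩]

end CharThree

theorem stmt_0_general (k : ℕ) (hk : 0 < k) {F : Type*} [Field F] [CharP F 3] (a : F)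
    (ha : a ^ 3 ^ k = -a) :
    ∃! l : F, l ^ (3 ^ k + 1) = 1 ∧
      l ^ (3 ^ (2 * k - 1)) + l * (l ^ (3 ^ (2 * k - 1)))⁻¹ + a ^ (3 ^ k) * l + a = 0 := by
  have cube_pow {x : F} (hx : x ^ (3 ^ k + 1) = 1) : (x ^ 3) ^ 3 ^ (2 * k - 1) = x := by
    rw [← pow_mul, ← pow_succ', Nat.sub_add_cancel (by lia), mul_comm, pow_mul,
      pow_sq_eq_self_of_pow_add_one_eq_one hx]
  have cubic_eq {x : F} : x + x ^ 3 * x⁻¹ + a ^ 3 ^ k * x ^ 3 + a =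
      x + x ^ 2 - a * x ^ 3 + a := by
    rw [ha]
    linear_combination x * mul_self_mul_inv x
  obtain ⟨m, ⟨hmU, hm⟩, hm_unique⟩ := existsUnique_unitCircle_cubic_root ha
  refine ⟨m ^ 3, ⟨?_, ?_⟩, ?_⟩
  · rw [pow_right_comm, hmU, one_pow]
  · rwa [cube_pow hmU, cubic_eq]
  · rintro l ⟨hlU, hl⟩
    have hl3 : (l ^ 3 ^ (2 * k - 1)) ^ 3 = l := by rw [pow_right_comm, cube_pow hlU]
    rw [← hm_unique (l ^ 3 ^ (2 * k - 1)) ⟨?_, ?_⟩, hl3]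
    · rw [pow_right_comm, hlU, one_pow]
    · rw [← cubic_eq, hl3, hl]

/-- **Lemma (uniqueness of the unit-circle root).**
Let `k ≥ 1`, `n = 2k`, and let `F` be the finite field with `3^n` elements.
For every `a ∈ F` with `a^(3^k - 1) = -1`, there is exactly one `λ` on the unit circle
`U = {λ : λ^(3^k + 1) = 1}` satisfying
`λ^(3^(n-1)) + λ·(λ^(3^(n-1)))⁻¹ + a^(3^k)·λ + a = 0`. -/
theorem stmt_0 (k : ℕ) (hk : 0 < k) (n : ℕ) (hn : n = 2 * k)
    (F : Type*) [Field F] [Fintype F] (hF : Fintype.card F = 3 ^ n)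
    (a : F) (ha : a ^ (3 ^ k - 1) = -1) :
    ∃! l : F, l ^ (3 ^ k + 1) = 1 ∧
      l ^ (3 ^ (n - 1)) + l * (l ^ (3 ^ (n - 1)))⁻¹ + a ^ (3 ^ k) * l + a = 0 := by
  have : CharP F 3 := charP_of_card_eq_prime_pow hF
  subst hn
  exact stmt_0_general k hk a (by rw [← pow_sub_one_mul (by positivity) a, ha, neg_one_mul])
end

section
/- Let k be a positive integer, n = 2k, and d = 3^k + 2. For every a ∈ F_{3^n} with a^{3^k - 1} = -1, the polynomial a^{-1}x^d is a complete permutation polynomial over F_{3^n}; that is, both the map x ↦ a^{-1}x^d and the map x ↦ a^{-1}x^d + x are bijections of F_{3^n}. -/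
/-!
Let `σ x = x ^ 3 ^ k` be the involution of `𝔽_{3^{2k}}` and `N x = x * σ x` its norm. Up to the
factor `a⁻¹`, both maps have the form `f x = x * (N x + c)` with `σ c = -c`: take `c = 0` and
`c = a`. Then `N (f x) = N x * (N x + c) * (N x - c) = N x ^ 3 - c ^ 2 * N x`, which in
characteristic three is additive in `N x`, with kernel `{0, c, -c}`. Only `0` in that kernel is
fixed by `σ`, so `f x` determines `N x`, and then `x` by cancelling `N x + c`, which can vanish
only when `x = 0`.
-/

lemma ringChar_ne_two_of_charP_three (R : Type*) [NonAssocSemiring R] [CharP R 3] :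
    ringChar R ≠ 2 := by
  rw [ringChar.eq R 3]
  decide

section Involution

variable {R : Type*} [CommRing R] {σ : R →+* R}

/-- The norm `x * σ x` of a ring endomorphism `σ`, meant for involutive `σ`, where it takes values
in the fixed ring of `σ`. For `σ x = x ^ 3 ^ k` it is the relative norm of `𝔽_{3^{2k}}` over
`𝔽_{3^k}`. It is defined for every `x : R`, with values in `R` rather than in the fixed ring. -/
def involutionNorm (σ : R →+* R) : R →* R :=
  MonoidHom.id R * σ

lemma involutionNorm_apply (x : R) : involutionNorm σ x = x * σ x :=
  rfl

lemma map_involutionNorm (hσ : Function.Involutive σ) (x : R) :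
    σ (involutionNorm σ x) = involutionNorm σ x := by
  rw [involutionNorm_apply, map_mul, hσ x, mul_comm]

lemma involutionNorm_eq_zero_iff [NoZeroDivisors R] (hσ : Function.Injective σ) {x : R} :
    involutionNorm σ x = 0 ↔ x = 0 := by
  rw [involutionNorm_apply, mul_eq_zero, map_eq_zero_iff σ hσ, or_self]

lemma involutionNorm_mul_involutionNorm_add (hσ : Function.Involutive σ) {c : R}
    (hc : σ c = -c) (x : R) :
    involutionNorm σ (x * (involutionNorm σ x + c)) =
      involutionNorm σ x ^ 3 - c ^ 2 * involutionNorm σ x := by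
  have norm_add : involutionNorm σ (involutionNorm σ x + c) =
      (involutionNorm σ x + c) * (involutionNorm σ x - c) := by
    rw [involutionNorm_apply, map_add, map_involutionNorm hσ, hc, sub_eq_add_neg]
  rw [map_mul, norm_add]
  ring

variable [IsDomain R]

lemma eq_zero_of_map_eq_self_of_map_eq_neg (h2 : ringChar R ≠ 2) {t : R} (ht : σ t = t)
    (ht' : σ t = -t) : t = 0 :=
  (Ring.eq_self_iff_eq_zero_of_char_ne_two h2).mp (ht'.symm.trans ht)

lemma eq_zero_of_map_eq_self_of_pow_three_eq (h2 : ringChar R ≠ 2) {c t : R} (hc : σ c = -c)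
    (ht : σ t = t) (h : t ^ 3 = c ^ 2 * t) : t = 0 := by
  by_contra h0
  have hsq : t ^ 2 = c ^ 2 := mul_right_cancel₀ h0 (by rw [← h, pow_succ t 2])
  have ht' : σ t = -t := by
    rcases sq_eq_sq_iff_eq_or_eq_neg.mp hsq with rfl | rfl
    · exact hc
    · rw [map_neg, hc]
  exact h0 (eq_zero_of_map_eq_self_of_map_eq_neg h2 ht ht')

variable [CharP R 3]

lemma injOn_pow_three_sub_sq_mul {c : R} (hc : σ c = -c) :
    Set.InjOn (fun t => t ^ 3 - c ^ 2 * t) {t | σ t = t} := by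
  intro s hs t ht (hst : s ^ 3 - c ^ 2 * s = t ^ 3 - c ^ 2 * t)
  refine sub_eq_zero.mp (eq_zero_of_map_eq_self_of_pow_three_eq
    (ringChar_ne_two_of_charP_three R) hc ?_ ?_)
  · rw [map_sub, hs, ht]
  · rw [sub_pow_char]
    linear_combination hst

theorem injective_mul_involutionNorm_add (hσ : Function.Involutive σ) {c : R} (hc : σ c = -c) :
    Function.Injective fun x => x * (involutionNorm σ x + c) := by
  intro x y (hxy : x * (involutionNorm σ x + c) = y * (involutionNorm σ y + c))
  have hN : involutionNorm σ x = involutionNorm σ y := by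
    refine injOn_pow_three_sub_sq_mul hc (map_involutionNorm hσ x) (map_involutionNorm hσ y) ?_
    simpa only [involutionNorm_mul_involutionNorm_add hσ hc] using congrArg (involutionNorm σ) hxy
  by_cases hNc : involutionNorm σ x + c = 0
  · have hNx : involutionNorm σ x = 0 := by
      refine eq_zero_of_map_eq_self_of_map_eq_neg (ringChar_ne_two_of_charP_three R)
        (map_involutionNorm hσ x) ?_
      rw [eq_neg_of_add_eq_zero_left hNc, map_neg, hc]
    have hx : x = 0 := (involutionNorm_eq_zero_iff hσ.injective).mp hNx
    have hy : y = 0 := (involutionNorm_eq_zero_iff hσ.injective).mp (hN.symm.trans hNx)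
    rw [hx, hy]
  · rw [← hN] at hxy
    exact mul_right_cancel₀ hNc hxy

end Involution

section FiniteField

variable {F : Type*} [Field F] [Fintype F] {k : ℕ}

lemma involutive_iterateFrobenius {p : ℕ} [ExpChar F p] (hF : Fintype.card F = p ^ (2 * k)) :
    Function.Involutive (iterateFrobenius F p k) := by
  intro x
  rw [← iterateFrobenius_add_apply, iterateFrobenius_def, ← two_mul, ← hF, FiniteField.pow_card]

theorem bijective_pow_add_mul (hF : Fintype.card F = 3 ^ (2 * k)) {c : F}
    (hc : c ^ 3 ^ k = -c) : Function.Bijective fun x : F => x ^ (3 ^ k + 2) + c * x := by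
  have : Fact (Nat.Prime 3) := ⟨Nat.prime_three⟩
  have : CharP F 3 := charP_of_card_eq_prime_pow hF
  refine Finite.injective_iff_bijective.mp ?_
  convert injective_mul_involutionNorm_add (involutive_iterateFrobenius hF) hc using 2 with x
  rw [involutionNorm_apply, iterateFrobenius_def]
  ring

end FiniteField

/-- **Theorem.** Let `k ≥ 1`, `n = 2k`, `d = 3^k + 2`, and let `F` be the finite field
with `3^n` elements. For every `a ∈ F` with `a^(3^k - 1) = -1`, the monomial `a⁻¹ x^d`
is a complete permutation polynomial over `F`: both `x ↦ a⁻¹ x^d` and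
`x ↦ a⁻¹ x^d + x` are bijections of `F`. -/
theorem stmt_1 (k : ℕ) (hk : 0 < k) (n : ℕ) (hn : n = 2 * k) (d : ℕ) (hd : d = 3 ^ k + 2)
    (F : Type*) [Field F] [Fintype F] (hF : Fintype.card F = 3 ^ n)
    (a : F) (ha : a ^ (3 ^ k - 1) = -1) :
    Function.Bijective (fun x : F => a⁻¹ * x ^ d) ∧
    Function.Bijective (fun x : F => a⁻¹ * x ^ d + x) := by
  subst hn hd
  have hq : 3 ^ k - 1 ≠ 0 := Nat.sub_ne_zero_of_lt (Nat.one_lt_pow hk.ne' (by norm_num))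
  have ha0 : a ≠ 0 := by
    rintro rfl
    simp [hq] at ha
  have ha_neg : a ^ 3 ^ k = -a := by
    rw [← Nat.sub_add_cancel (Nat.one_le_pow k 3 three_pos), pow_succ, ha, neg_one_mul]
  have h0 : (0 : F) ^ 3 ^ k = -0 := by simp
  have hmul : Function.Bijective (a⁻¹ * ·) := mulLeft_bijective₀ a⁻¹ (inv_ne_zero ha0)
  constructor
  · simpa only [Function.comp_def, zero_mul, add_zero] using
      hmul.comp (bijective_pow_add_mul hF h0)
  · simpa only [Function.comp_def, mul_add, inv_mul_cancel_left₀ ha0] using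
      hmul.comp (bijective_pow_add_mul hF ha_neg)
end

section
/- Let p be an odd prime with p ≠ 5, k a positive integer with gcd(5, p^k - 1) = 1, n = 4k, and d = (p^{4k} - 1)/(p^k - 1) + 1. Let a ∈ F_{p^n}, a ≠ 0, set a_i = a^{p^{ik}} for 0 ≤ i ≤ 3, and let λ_1, λ_2, λ_3, λ_4 be the elementary symmetric functions of a_0, a_1, a_2, a_3 (so λ_1 = a_0+a_1+a_2+a_3, ..., λ_4 = a_0a_1a_2a_3), which lie in F_{p^k}. Then a^{-1}x^d is a complete permutation polynomial over F_{p^n} if and only if one of the following holds (all arithmetic in F_{p^k}; fractions denote division by the invertible elements 5, 25, 125 since p ≠ 5): (1) -(2/5)λ_1² + λ_2 = 0, -(2/5)λ_1λ_3 - (3/125)λ_1⁴ + (3/25)λ_2λ_1² + λ_4 = 0, and λ_3 + (4/25)λ_1³ - (3/5)λ_1λ_2 = 0; (2) p^k ≡ 2 or 3 (mod 5), 5^{-1}·(-(2/5)λ_1² + λ_2)² = -(2/5)λ_1λ_3 - (3/125)λ_1⁴ + (3/25)λ_2λ_1² + λ_4, and λ_3 + (4/25)λ_1³ - (3/5)λ_1λ_2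 = 0; (3) p = 3, k = 2, λ_2 = λ_1², λ_3 = -λ_1³, and (λ_4 + λ_1⁴)² = -1; (4) p = 3, k = 1, λ_2 = λ_1² + 1, λ_3 = -λ_1³, and λ_4 = -λ_1⁴; (5) p = 3, k = 1, λ_2 = λ_1² + 2, λ_3 = -λ_1³, and λ_4 = -λ_1⁴ + 1; (6) p = 7, k = 1, λ_1² + λ_2 = 0, λ_1λ_3 + 3λ_1⁴ - λ_2λ_1² + λ_4 = 0, and λ_3 + λ_1³ - 2λ_1λ_2 = 2 or -2; (7) p = 7, k = 1, and there exists v ∈ {3, 5, 6} with λ_1² + λ_2 = v, λ_1λ_3 + 3λ_1⁴ - λ_2λ_1² + λ_4 = 3v², and λ_3 + λ_1³ - 2λ_1λ_2 = 1 or -1; (8) p = 13, k = 1, and there exists v ∈ {2, -2, 5, -5, 6, -6} with -3λ_1² + λ_2 = v, -3λ_1λ_3 - 2λ_1⁴ - 3λ_2λ_1² + λ_4 = 3v², and λ_3 - 4λ_1³ + 2λ_1λ_2 = 0. -/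
/-!
Let `q = p ^ k` and `N x = x ^ ((q ^ 4 - 1) / (q - 1))`, the norm to the field `K` with `q`
elements. Both maps have the form `x ↦ a⁻¹ x (N x + b)` with `b ∈ {0, a}`, and such a map permutes
`F` exactly when the map it induces on norms permutes `K`. For `b = 0` this is `c ↦ c ^ 5` up to a
constant, and for `b = a` it is `c ↦ c N (c + a) = c (c ^ 4 + λ₁ c ^ 3 + λ₂ c ^ 2 + λ₃ c + λ₄)`, up
to a constant. Translating by `λ₁ / 5` leaves the reduced quintic `x ^ 5 + A x ^ 3 + B x ^ 2 + C x`.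
If it permutes `K`, the power sums of its values vanish (Hermite's criterion), and the resulting
relations between the coefficients, binomial coefficients being evaluated as polynomials in `s / 5`
when `5 t = q + s`, leave only the Dickson polynomials `D₅` and finitely many cases with `q ≤ 13`.
-/

open Finset Function

section PowerSums

variable {K : Type*} [Field K] [Fintype K]

lemma sum_pow_eq_ite {i : ℕ} (hi : i ≠ 0) :
    ∑ x : K, x ^ i = if Fintype.card K - 1 ∣ i then -1 else 0 := by
  classical
  rw [← FiniteField.sum_pow_units K i, ← Fintype.sum_subtype_add_sum_subtype (· ≠ 0)]
  have hzero : ∑ x : {x : K // ¬x ≠ 0}, (x : K) ^ i = 0 :=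
    sum_eq_zero fun x _ => by rw [not_not.mp x.2, zero_pow hi]
  rw [hzero, add_zero]
  exact (Fintype.sum_equiv unitsEquivNeZero _ _ fun _ => rfl).symm

lemma sum_pow_eq_zero_of_bijective {f : K → K} (hf : Bijective f) {t : ℕ}
    (ht : t < Fintype.card K - 1) : ∑ x, f x ^ t = 0 := by
  rw [hf.sum_comp (· ^ t), FiniteField.sum_pow_lt_card_sub_one K t ht]

end PowerSums

section Binomials

variable {K : Type*} [Field K] [Fintype K]

lemma cast_choose_add_mul_card (t j : ℕ) {n : ℕ} (hn : n < Fintype.card K) :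
    ((t + Fintype.card K * j).choose n : K) = t.choose n := by
  obtain ⟨p, hchar⟩ := CharP.exists K
  obtain ⟨k, hp, hq⟩ := FiniteField.card K p
  induction j with
  | zero => simp
  | succ j ih =>
    rw [mul_add_one, ← add_assoc, Nat.add_choose_eq, Nat.cast_sum,
      sum_eq_single_of_mem (n, 0) (by simp), ← ih]
    · simp
    · rintro ⟨i, l⟩ hil hne
      rw [HasAntidiagonal.mem_antidiagonal] at hil
      have hl : l ≠ 0 := by rintro rfl; exact hne (by simpa using hil)
      have hdvd : p ∣ (Fintype.card K).choose l :=
        hq ▸ hp.dvd_choose_pow hl (by omega)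
      rw [Nat.cast_mul, (CharP.cast_eq_zero_iff K p _).mpr hdvd, mul_zero]

lemma exists_dvd_mul_add_one {d N : ℕ} (hd : d.Coprime N) (hN : N ≠ 0) :
    ∃ j, N ∣ d * j + 1 := by
  obtain ⟨j, -, hj⟩ := Nat.exists_mul_mod_eq_of_coprime (N - 1) hd hN
  refine ⟨j, (Nat.modEq_zero_iff_dvd).mp ?_⟩
  calc d * j + 1 ≡ N - 1 + 1 [MOD N] := Nat.ModEq.add_right 1 hj
    _ = N := Nat.sub_add_cancel (Nat.pos_of_ne_zero hN)
    _ ≡ 0 [MOD N] := by simp [Nat.ModEq]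

lemma dvd_pow_mul_choose_sub {p N d T s n m : ℕ} {u : ℤ} (hp : p.Prime) (hpd : ¬p ∣ d)
    (hN : ¬p ^ N ∣ n.factorial) (hT : (p : ℤ) ^ N ∣ d * T - s)
    (hu : (d : ℤ) ^ m * ∏ i ∈ range n, ((s : ℤ) - d * i) = d ^ n * n.factorial * u) :
    (p : ℤ) ∣ d ^ m * T.choose n - u := by
  have hp' : Prime (p : ℤ) := Nat.prime_iff_prime_int.mp hp
  have hchoose : ∏ i ∈ range n, ((d : ℤ) * T - d * i) = d ^ n * (n.factorial * T.choose n) := by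
    have h : (n.factorial * T.choose n : ℤ) = T.descFactorial n :=
      mod_cast (Nat.descFactorial_eq_factorial_mul_choose T n).symm
    rw [h, ← descPochhammer_eval_eq_descFactorial ℤ T n,
      descPochhammer_eval_eq_prod_range]
    simp only [← mul_sub, prod_mul_distrib, prod_const, card_range]
  have hprod : (p : ℤ) ^ N ∣
      ∏ i ∈ range n, ((d : ℤ) * T - d * i) - ∏ i ∈ range n, ((s : ℤ) - d * i) :=
    (Int.ModEq.prod fun i _ => Int.modEq_iff_dvd.mpr <| by
      simpa only [sub_sub_sub_cancel_right] using hT).dvd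
  have hmul : (p : ℤ) ^ N ∣ d ^ n * (n.factorial * (d ^ m * T.choose n - u)) := by
    have hfactor : (d : ℤ) ^ n * (n.factorial * (d ^ m * T.choose n - u)) = d ^ m *
        (∏ i ∈ range n, ((d : ℤ) * T - d * i) - ∏ i ∈ range n, ((s : ℤ) - d * i)) := by
      linear_combination hu - (d : ℤ) ^ m * hchoose
    exact hfactor ▸ hprod.mul_left _
  have hcop : IsCoprime ((p : ℤ) ^ N) ((d : ℤ) ^ n) :=
    ((hp'.coprime_iff_not_dvd).mpr (mod_cast hpd)).pow
  by_contra hndvd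
  exact hN (mod_cast (((hp'.coprime_iff_not_dvd).mpr hndvd).pow_left).dvd_of_dvd_mul_right
    (hcop.dvd_of_dvd_mul_left hmul))

/-- If `d * t ≡ s` modulo `q`, then in characteristic `p` the integer `t.choose n` agrees with
the generalised binomial coefficient of `s / d`, here written as `u / d ^ m`. -/
lemma pow_mul_cast_choose {d t s n m : ℕ} {u : ℤ} (hd : (d : K) ≠ 0)
    (ht : d * t = Fintype.card K + s) (hn : n < Fintype.card K)
    (hu : (d : ℤ) ^ m * ∏ i ∈ range n, ((s : ℤ) - d * i) = d ^ n * n.factorial * u) :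
    (d : K) ^ m * t.choose n = u := by
  obtain ⟨p, hchar⟩ := CharP.exists K
  obtain ⟨k, hp, -⟩ := FiniteField.card K p
  have hpd : ¬p ∣ d := fun h => hd ((CharP.cast_eq_zero_iff K p d).mpr h)
  have hcop := ((hp.coprime_iff_not_dvd.mpr hpd).pow_left n.factorial).symm
  obtain ⟨j, hj⟩ := exists_dvd_mul_add_one hcop (pow_ne_zero _ hp.ne_zero)
  -- Moving `t` inside its class modulo `q` makes `d * T ≡ s` modulo a power of `p` exceeding `n!`.
  set T := t + Fintype.card K * j with hTdef
  have hT : (p : ℤ) ^ n.factorial ∣ d * T - s := by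
    have hfactor : (d * T - s : ℤ) = Fintype.card K * ((d * j + 1 : ℕ) : ℤ) := by
      have ht' : (d : ℤ) * t = Fintype.card K + s := mod_cast ht
      push_cast [hTdef]
      linear_combination ht'
    rw [hfactor]
    exact (mod_cast hj : (p : ℤ) ^ n.factorial ∣ ((d * j + 1 : ℕ) : ℤ)).mul_left _
  have hfact : ¬p ^ n.factorial ∣ n.factorial := fun h =>
    (Nat.lt_pow_self hp.one_lt).not_ge (Nat.le_of_dvd n.factorial_pos h)
  have hdvd := dvd_pow_mul_choose_sub hp hpd hfact hT hu
  have hcast := (CharP.intCast_eq_zero_iff K p _).mpr hdvd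
  push_cast [hTdef] at hcast
  rw [← cast_choose_add_mul_card t j hn, ← sub_eq_zero]
  exact_mod_cast hcast

end Binomials

section Hermite

/-- The reduced quintic `x ^ 5 + A x ^ 3 + B x ^ 2 + C x`, to which every monic quintic reduces by
translations when `5` is invertible. -/
def quintic {R : Type*} [CommRing R] (A B C x : R) : R := x ^ 5 + A * x ^ 3 + B * x ^ 2 + C * x

/-- The index set of the trinomial expansion of the coefficient of `y ^ e` in
`(1 + A y ^ 2 + B y ^ 3 + C y ^ 4) ^ t`: the triple `(n, m, c)` stands for the choice of `n - m`
terms `A y ^ 2`, `m - c` terms `B y ^ 3` and `c` terms `C y ^ 4`. -/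
def quinticExponents (e : ℕ) : Finset (ℕ × ℕ × ℕ) :=
  {i ∈ range (e / 2 + 1) ×ˢ range (e / 3 + 1) ×ˢ range (e / 4 + 1) |
    i.2.2 ≤ i.2.1 ∧ i.2.1 ≤ i.1 ∧ 2 * i.1 + i.2.1 + i.2.2 = e}

/-- The coefficient of `x ^ (5 * t - e)` in `quintic A B C x ^ t`. -/
def quinticPowCoeff {R : Type*} [CommRing R] (A B C : R) (t e : ℕ) : R :=
  ∑ i ∈ quinticExponents e, t.choose i.1 * i.1.choose i.2.1 * i.2.1.choose i.2.2 *
    (A ^ (i.1 - i.2.1) * B ^ (i.2.1 - i.2.2) * C ^ i.2.2)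

variable {R : Type*} [CommRing R]

lemma mem_quinticExponents {n m c e : ℕ} :
    (n, m, c) ∈ quinticExponents e ↔ c ≤ m ∧ m ≤ n ∧ 2 * n + m + c = e := by
  simp only [quinticExponents, mem_filter, mem_product, mem_range]
  omega

lemma quintic_pow_eq_sum_triple (A B C x : R) (t : ℕ) :
    quintic A B C x ^ t = ∑ n ∈ range (t + 1), ∑ m ∈ range (n + 1), ∑ c ∈ range (m + 1),
      t.choose n * n.choose m * m.choose c * (A ^ (n - m) * B ^ (m - c) * C ^ c) *
        x ^ (5 * t - (2 * n + m + c)) := by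
  have hsplit : quintic A B C x = (C * x + B * x ^ 2 + A * x ^ 3) + x ^ 5 := by
    rw [quintic]; ring
  rw [hsplit, add_pow]
  refine sum_congr rfl fun n hn => ?_
  rw [add_pow, sum_mul, sum_mul]
  refine sum_congr rfl fun m hm => ?_
  simp only [add_pow, sum_mul]
  refine sum_congr rfl fun c hc => ?_
  simp only [mem_range] at hn hm hc
  have hexp : 5 * t - (2 * n + m + c) = c + 2 * (m - c) + 3 * (n - m) + 5 * (t - n) := by omega
  rw [hexp]
  ring

lemma quintic_pow (A B C x : R) (t : ℕ) :
    quintic A B C x ^ t =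
      ∑ e ∈ range (4 * t + 1), quinticPowCoeff A B C t e * x ^ (5 * t - e) := by
  let S := (range (t + 1) ×ˢ range (t + 1) ×ˢ range (t + 1)).filter
    fun i => i.2.2 ≤ i.2.1 ∧ i.2.1 ≤ i.1
  let weight (i : ℕ × ℕ × ℕ) : ℕ := 2 * i.1 + i.2.1 + i.2.2
  have hweight : ∀ i ∈ S, weight i ∈ range (4 * t + 1) := by
    simp only [S, weight, mem_filter, mem_product, mem_range]; omega
  rw [quintic_pow_eq_sum_triple]
  calc _ = ∑ i ∈ S, t.choose i.1 * i.1.choose i.2.1 * i.2.1.choose i.2.2 *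
        (A ^ (i.1 - i.2.1) * B ^ (i.2.1 - i.2.2) * C ^ i.2.2) * x ^ (5 * t - weight i) := by
        symm
        rw [sum_finset_product S (range (t + 1))
          (fun n => (range (n + 1) ×ˢ range (n + 1)).filter fun j => j.2 ≤ j.1)]
        · refine sum_congr rfl fun n _ => ?_
          rw [sum_finset_product _ (range (n + 1)) (fun m => range (m + 1))]
          simp only [mem_filter, mem_product, mem_range]; omega
        · simp only [S, mem_filter, mem_product, mem_range]; omega
    _ = _ := by
        rw [← sum_fiberwise_of_maps_to hweight]
        refine sum_congr rfl fun e _ => ?_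
        rw [quinticPowCoeff, sum_mul]
        refine sum_subset_zero_on_sdiff ?_ ?_ ?_
        · rintro ⟨n, m, c⟩
          simp only [S, weight, mem_filter, mem_quinticExponents]; omega
        · rintro ⟨n, m, c⟩ hi
          simp only [S, weight, mem_sdiff, mem_quinticExponents, mem_filter, mem_product,
            mem_range] at hi
          simp [Nat.choose_eq_zero_of_lt (show t < n by omega)]
        · rintro ⟨n, m, c⟩ hi
          rw [(mem_filter.mp hi).2]

variable {K : Type*} [Field K] [Fintype K]

lemma sum_quinticPowCoeff_eq_zero {A B C : K} (hf : Bijective (quintic A B C)) {t : ℕ}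
    (h0 : t ≠ 0) (ht : t < Fintype.card K - 1) :
    ∑ e ∈ range (4 * t + 1) with Fintype.card K - 1 ∣ 5 * t - e, quinticPowCoeff A B C t e = 0 := by
  have hsum := sum_pow_eq_zero_of_bijective hf ht
  simp only [quintic_pow] at hsum
  rw [sum_comm] at hsum
  rw [sum_filter, ← neg_eq_zero, ← sum_neg_distrib]
  refine (sum_congr rfl fun e he => ?_).trans hsum
  rw [← mul_sum, sum_pow_eq_ite (by rw [mem_range] at he; omega)]
  split_ifs <;> simp

/-- Here `5 * t - (s + 1) = q - 1`, and the bound on `s` excludes further multiples of `q - 1`. -/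
lemma quinticPowCoeff_eq_zero {A B C : K} (hf : Bijective (quintic A B C)) {s t : ℕ}
    (ht : 5 * t = Fintype.card K + s) (hs : s + 2 < Fintype.card K) :
    quinticPowCoeff A B C t (s + 1) = 0 := by
  have hfilter : (range (4 * t + 1)).filter (Fintype.card K - 1 ∣ 5 * t - ·) = {s + 1} := by
    ext e
    simp only [mem_filter, mem_range, mem_singleton]
    constructor
    · rintro ⟨he, j, hj⟩
      have hj1 : j = 1 := by
        have hj0 : j ≠ 0 := by rintro rfl; omega
        have hj2 : ¬2 ≤ j := fun h => by
          have := Nat.mul_le_mul_left (Fintype.card K - 1) h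
          omega
        omega
      rw [hj1] at hj
      omega
    · rintro rfl
      exact ⟨by omega, 1, by omega⟩
  rw [← sum_quinticPowCoeff_eq_zero hf (t := t) (by omega) (by omega), hfilter, sum_singleton]

end Hermite

section Coefficients

variable {R : Type*} [CommRing R] (A B C : R) (t : ℕ)

lemma quinticPowCoeff_one : quinticPowCoeff A B C t 1 = 0 := by
  rw [quinticPowCoeff, show quinticExponents 1 = ∅ from rfl, sum_empty]

lemma quinticPowCoeff_two : quinticPowCoeff A B C t 2 = t * A := by
  rw [quinticPowCoeff, show quinticExponents 2 = {(1, 0, 0)} from rfl]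
  simp

lemma quinticPowCoeff_three : quinticPowCoeff A B C t 3 = t * B := by
  rw [quinticPowCoeff, show quinticExponents 3 = {(1, 1, 0)} from rfl]
  simp

lemma quinticPowCoeff_four :
    quinticPowCoeff A B C t 4 = t * C + t.choose 2 * A ^ 2 := by
  rw [quinticPowCoeff, show quinticExponents 4 = {(1, 1, 1), (2, 0, 0)} by decide]
  simp

lemma quinticPowCoeff_eight : quinticPowCoeff A 0 C t 8 =
    t.choose 2 * C ^ 2 + t.choose 3 * (3 * A ^ 2 * C) + t.choose 4 * A ^ 4 := by
  have : quinticExponents 8 = {(2, 2, 2), (3, 1, 1), (3, 2, 0), (4, 0, 0)} := by decide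
  simp [quinticPowCoeff, this]
  ring

lemma quinticPowCoeff_nine : quinticPowCoeff A B C t 9 =
    t.choose 3 * (6 * A * B * C + B ^ 3) + t.choose 4 * (4 * A ^ 3 * B) := by
  have : quinticExponents 9 = {(3, 2, 1), (3, 3, 0), (4, 1, 0)} := by decide
  simp [quinticPowCoeff, this, Nat.choose]
  ring

lemma quinticPowCoeff_twelve :
    quinticPowCoeff 0 B C t 12 = t.choose 3 * C ^ 3 + t.choose 4 * B ^ 4 := by
  have : quinticExponents 12 = {(3, 3, 3), (4, 2, 2), (4, 3, 1), (4, 4, 0), (5, 1, 1), (5, 2, 0),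
    (6, 0, 0)} := by decide
  simp [quinticPowCoeff, this]

lemma quinticPowCoeff_fourteen : quinticPowCoeff A B C t 14 =
    t.choose 4 * (4 * A * C ^ 3 + 6 * B ^ 2 * C ^ 2) +
    t.choose 5 * (10 * A ^ 3 * C ^ 2 + 30 * A ^ 2 * B ^ 2 * C + 5 * A * B ^ 4) +
    t.choose 6 * (6 * A ^ 5 * C + 15 * A ^ 4 * B ^ 2) + t.choose 7 * A ^ 7 := by
  have : quinticExponents 14 = {(4, 3, 3), (4, 4, 2), (5, 2, 2), (5, 3, 1), (5, 4, 0), (6, 1, 1),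
    (6, 2, 0), (7, 0, 0)} := by decide
  simp [quinticPowCoeff, this, Nat.choose]
  ring

lemma quinticPowCoeff_seventeen :
    quinticPowCoeff 0 B C t 17 = t.choose 5 * (10 * B ^ 3 * C ^ 2) := by
  have : quinticExponents 17 = {(5, 4, 3), (5, 5, 2), (6, 3, 2), (6, 4, 1), (6, 5, 0), (7, 2, 1),
    (7, 3, 0), (8, 1, 0)} := by decide
  simp [quinticPowCoeff, this, Nat.choose]
  ring

lemma quinticPowCoeff_eighteen : quinticPowCoeff A 0 C t 18 =
    t.choose 5 * (5 * A * C ^ 4) + t.choose 6 * (20 * A ^ 3 * C ^ 3) +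
    t.choose 7 * (21 * A ^ 5 * C ^ 2) + t.choose 8 * (8 * A ^ 7 * C) + t.choose 9 * A ^ 9 := by
  have : quinticExponents 18 = {(5, 4, 4), (5, 5, 3), (6, 3, 3), (6, 4, 2), (6, 5, 1), (6, 6, 0),
    (7, 2, 2), (7, 3, 1), (7, 4, 0), (8, 1, 1), (8, 2, 0), (9, 0, 0)} := by decide
  simp [quinticPowCoeff, this, Nat.choose]
  ring

lemma quinticPowCoeff_zero_zero (e : ℕ) :
    quinticPowCoeff 0 0 C t e = if 4 ∣ e then t.choose (e / 4) * C ^ (e / 4) else 0 := by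
  have hvanish : ∀ i ∈ quinticExponents e, i ≠ (e / 4, e / 4, e / 4) ∨ ¬4 ∣ e →
      t.choose i.1 * i.1.choose i.2.1 * i.2.1.choose i.2.2 *
        ((0 : R) ^ (i.1 - i.2.1) * 0 ^ (i.2.1 - i.2.2) * C ^ i.2.2) = 0 := by
    rintro ⟨n, m, c⟩ hi hne
    rw [mem_quinticExponents] at hi
    have hlt : n - m ≠ 0 ∨ m - c ≠ 0 := by
      simp only [ne_eq, Prod.mk.injEq] at hne
      omega
    rcases hlt with h | h <;> simp [zero_pow h]
  rw [quinticPowCoeff]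
  split_ifs with he
  · rw [sum_eq_single_of_mem (e / 4, e / 4, e / 4) (mem_quinticExponents.mpr (by omega))
      fun i hi hne => hvanish i hi (.inl hne)]
    simp
  · exact sum_eq_zero fun i hi => hvanish i hi (.inr he)

end Coefficients

section Relations

variable {K : Type*} [Field K] [Fintype K] {A B C : K}

lemma five_pow_mul_cast_choose (h5 : (5 : K) ≠ 0) {s t : ℕ} (ht : 5 * t = Fintype.card K + s)
    (n m : ℕ) (u : ℤ) (hn : n < Fintype.card K)
    (hu : (5 : ℤ) ^ m * ∏ i ∈ range n, ((s : ℤ) - 5 * i) = 5 ^ n * n.factorial * u) :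
    (5 : K) ^ m * t.choose n = u :=
  mod_cast pow_mul_cast_choose (d := 5) (mod_cast h5) ht hn (mod_cast hu)

lemma hermite_relation_one (h5 : (5 : K) ≠ 0) (hf : Bijective (quintic A B C))
    (hmod : Fintype.card K % 5 = 4) (hq : 3 < Fintype.card K) : A = 0 := by
  obtain ⟨t, ht⟩ : ∃ t, 5 * t = Fintype.card K + 1 := ⟨(Fintype.card K + 1) / 5, by omega⟩
  have h := quinticPowCoeff_eq_zero hf ht (by omega)
  rw [quinticPowCoeff_two] at h
  have c1 := five_pow_mul_cast_choose h5 ht 1 1 1 (by omega) (by norm_num)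
  push_cast [Nat.choose_one_right] at c1
  linear_combination 5 * h - A * c1

lemma hermite_relation_eleven (h5 : (5 : K) ≠ 0) (hf : Bijective (quintic 0 B C))
    (hmod : Fintype.card K % 5 = 4) (hq : 13 < Fintype.card K) :
    11 * (5 * C ^ 3 - B ^ 4) = 0 := by
  obtain ⟨t, ht⟩ : ∃ t, 5 * t = Fintype.card K + 11 := ⟨(Fintype.card K + 11) / 5, by omega⟩
  have h := quinticPowCoeff_eq_zero hf ht (by omega)
  rw [quinticPowCoeff_twelve] at h
  have c3 := five_pow_mul_cast_choose h5 ht 3 3 11 (by omega)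
    (by norm_num [prod_range_succ, Nat.factorial])
  have c4 := five_pow_mul_cast_choose h5 ht 4 4 (-11) (by omega)
    (by norm_num [prod_range_succ, Nat.factorial])
  push_cast at c3 c4
  linear_combination 5 ^ 4 * h - 5 * C ^ 3 * c3 - B ^ 4 * c4

lemma hermite_relation_sixteen (h5 : (5 : K) ≠ 0) (hf : Bijective (quintic 0 B C))
    (hmod : Fintype.card K % 5 = 4) (hq : 18 < Fintype.card K) :
    11 * 2 ^ 5 * (B ^ 3 * C ^ 2) = 0 := by
  obtain ⟨t, ht⟩ : ∃ t, 5 * t = Fintype.card K + 16 := ⟨(Fintype.card K + 16) / 5, by omega⟩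
  have h := quinticPowCoeff_eq_zero hf ht (by omega)
  rw [quinticPowCoeff_seventeen] at h
  have c5 := five_pow_mul_cast_choose h5 ht 5 6 (-176) (by omega)
    (by norm_num [prod_range_succ, Nat.factorial])
  push_cast at c5
  refine (mul_eq_zero.mp ?_).resolve_left h5
  linear_combination -5 ^ 6 * h + 10 * B ^ 3 * C ^ 2 * c5

lemma hermite_relation_two (h5 : (5 : K) ≠ 0) (hf : Bijective (quintic A B C))
    (hmod : Fintype.card K % 5 = 3) (hq : 4 < Fintype.card K) : 2 * B = 0 := by
  obtain ⟨t, ht⟩ : ∃ t, 5 * t = Fintype.card K + 2 := ⟨(Fintype.card K + 2) / 5, by omega⟩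
  have h := quinticPowCoeff_eq_zero hf ht (by omega)
  rw [quinticPowCoeff_three] at h
  have c1 := five_pow_mul_cast_choose h5 ht 1 1 2 (by omega) (by norm_num)
  push_cast [Nat.choose_one_right] at c1
  linear_combination 5 * h - B * c1

lemma hermite_relation_seven (h5 : (5 : K) ≠ 0) (hf : Bijective (quintic A 0 C))
    (hmod : Fintype.card K % 5 = 3) (hq : 9 < Fintype.card K) :
    7 * ((5 * C - A ^ 2) * (5 * C - 2 * A ^ 2)) = 0 := by
  obtain ⟨t, ht⟩ : ∃ t, 5 * t = Fintype.card K + 7 := ⟨(Fintype.card K + 7) / 5, by omega⟩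
  have h := quinticPowCoeff_eq_zero hf ht (by omega)
  rw [quinticPowCoeff_eight] at h
  have c2 := five_pow_mul_cast_choose h5 ht 2 2 7 (by omega)
    (by norm_num [prod_range_succ, Nat.factorial])
  have c3 := five_pow_mul_cast_choose h5 ht 3 3 (-7) (by omega)
    (by norm_num [prod_range_succ, Nat.factorial])
  have c4 := five_pow_mul_cast_choose h5 ht 4 4 14 (by omega)
    (by norm_num [prod_range_succ, Nat.factorial])
  push_cast at c2 c3 c4
  linear_combination 5 ^ 4 * h - 5 ^ 2 * C ^ 2 * c2 - 15 * A ^ 2 * C * c3 - A ^ 4 * c4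

lemma hermite_relation_seventeen (h5 : (5 : K) ≠ 0) (hf : Bijective (quintic A 0 C))
    (hmod : Fintype.card K % 5 = 3) (hq : 19 < Fintype.card K) :
    17 * (A * (65625 * C ^ 4 - 70000 * A ^ 2 * C ^ 3 + 27300 * A ^ 4 * C ^ 2 - 4680 * A ^ 6 * C +
      299 * A ^ 8)) = 0 := by
  obtain ⟨t, ht⟩ : ∃ t, 5 * t = Fintype.card K + 17 := ⟨(Fintype.card K + 17) / 5, by omega⟩
  have h := quinticPowCoeff_eq_zero hf ht (by omega)
  rw [quinticPowCoeff_eighteen] at h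
  have c5 := five_pow_mul_cast_choose h5 ht 5 6 (-357) (by omega)
    (by norm_num [prod_range_succ, Nat.factorial])
  have c6 := five_pow_mul_cast_choose h5 ht 6 7 476 (by omega)
    (by norm_num [prod_range_succ, Nat.factorial])
  have c7 := five_pow_mul_cast_choose h5 ht 7 8 (-884) (by omega)
    (by norm_num [prod_range_succ, Nat.factorial])
  have c8 := five_pow_mul_cast_choose h5 ht 8 9 1989 (by omega)
    (by norm_num [prod_range_succ, Nat.factorial])
  have c9 := five_pow_mul_cast_choose h5 ht 9 10 (-5083) (by omega)
    (by norm_num [prod_range_succ, Nat.factorial])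
  push_cast at c5 c6 c7 c8 c9
  linear_combination -5 ^ 10 * h + 5 ^ 5 * A * C ^ 4 * c5 + 5 ^ 3 * (20 * A ^ 3 * C ^ 3) * c6 +
    5 ^ 2 * (21 * A ^ 5 * C ^ 2) * c7 + 5 * (8 * A ^ 7 * C) * c8 + A ^ 9 * c9

lemma hermite_relation_three (h5 : (5 : K) ≠ 0) (hf : Bijective (quintic A B C))
    (hmod : Fintype.card K % 5 = 2) (hq : 5 < Fintype.card K) : 3 * (5 * C - A ^ 2) = 0 := by
  obtain ⟨t, ht⟩ : ∃ t, 5 * t = Fintype.card K + 3 := ⟨(Fintype.card K + 3) / 5, by omega⟩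
  have h := quinticPowCoeff_eq_zero hf ht (by omega)
  rw [quinticPowCoeff_four] at h
  have c1 := five_pow_mul_cast_choose h5 ht 1 1 3 (by omega) (by norm_num)
  have c2 := five_pow_mul_cast_choose h5 ht 2 2 (-3) (by omega)
    (by norm_num [prod_range_succ, Nat.factorial])
  push_cast [Nat.choose_one_right] at c1 c2
  linear_combination 5 ^ 2 * h - 5 * C * c1 - A ^ 2 * c2

lemma hermite_relation_eight (h5 : (5 : K) ≠ 0) (hf : Bijective (quintic A B C))
    (hmod : Fintype.card K % 5 = 2) (hq : 10 < Fintype.card K) :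
    2 ^ 3 * (B * (5 * B ^ 2 + 30 * A * C - 7 * A ^ 3)) = 0 := by
  obtain ⟨t, ht⟩ : ∃ t, 5 * t = Fintype.card K + 8 := ⟨(Fintype.card K + 8) / 5, by omega⟩
  have h := quinticPowCoeff_eq_zero hf ht (by omega)
  rw [quinticPowCoeff_nine] at h
  have c3 := five_pow_mul_cast_choose h5 ht 3 3 (-8) (by omega)
    (by norm_num [prod_range_succ, Nat.factorial])
  have c4 := five_pow_mul_cast_choose h5 ht 4 4 14 (by omega)
    (by norm_num [prod_range_succ, Nat.factorial])
  push_cast at c3 c4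
  linear_combination -5 ^ 4 * h + 5 * (6 * A * B * C + B ^ 3) * c3 + 4 * A ^ 3 * B * c4

lemma hermite_relation_thirteen (h5 : (5 : K) ≠ 0) (hf : Bijective (quintic A B C))
    (hmod : Fintype.card K % 5 = 2) (hq : 15 < Fintype.card K) :
    2 * 13 * (625 * (4 * A * C ^ 3 + 6 * B ^ 2 * C ^ 2) -
      175 * (10 * A ^ 3 * C ^ 2 + 30 * A ^ 2 * B ^ 2 * C + 5 * A * B ^ 4) +
      70 * (6 * A ^ 5 * C + 15 * A ^ 4 * B ^ 2) - 34 * A ^ 7) = 0 := by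
  obtain ⟨t, ht⟩ : ∃ t, 5 * t = Fintype.card K + 13 := ⟨(Fintype.card K + 13) / 5, by omega⟩
  have h := quinticPowCoeff_eq_zero hf ht (by omega)
  rw [quinticPowCoeff_fourteen] at h
  have c4 := five_pow_mul_cast_choose h5 ht 4 4 (-26) (by omega)
    (by norm_num [prod_range_succ, Nat.factorial])
  have c5 := five_pow_mul_cast_choose h5 ht 5 6 182 (by omega)
    (by norm_num [prod_range_succ, Nat.factorial])
  have c6 := five_pow_mul_cast_choose h5 ht 6 7 (-364) (by omega)
    (by norm_num [prod_range_succ, Nat.factorial])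
  have c7 := five_pow_mul_cast_choose h5 ht 7 8 884 (by omega)
    (by norm_num [prod_range_succ, Nat.factorial])
  push_cast at c4 c5 c6 c7
  linear_combination -5 ^ 8 * h + 5 ^ 4 * (4 * A * C ^ 3 + 6 * B ^ 2 * C ^ 2) * c4 +
    5 ^ 2 * (10 * A ^ 3 * C ^ 2 + 30 * A ^ 2 * B ^ 2 * C + 5 * A * B ^ 4) * c5 +
    5 * (6 * A ^ 5 * C + 15 * A ^ 4 * B ^ 2) * c6 + A ^ 7 * c7

end Relations

section QuadraticResidues

variable {K : Type*} [Field K]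

lemma ringChar_ne_two_of_two_ne_zero (h2 : (2 : K) ≠ 0) : ringChar K ≠ 2 := fun h =>
  h2 (by simpa only [h, Nat.cast_ofNat] using ringChar.Nat.cast_ringChar (R := K))

lemma eq_zero_of_sq_eq_mul_sq {g r s : K} (hg : ¬IsSquare g) (h : r ^ 2 = g * s ^ 2) : s = 0 := by
  by_contra hs
  exact hg ⟨r / s, by field_simp; exact h.symm⟩

lemma exists_eq_sq_or_mul_eq_sq [Finite K] {g : K} (hg : ¬IsSquare g) (z : K) :
    ∃ w, z = w ^ 2 ∨ g * z = w ^ 2 := by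
  classical
  have := Fintype.ofFinite K
  by_cases hz : IsSquare z
  · obtain ⟨w, hw⟩ := hz
    exact ⟨w, .inl (by rw [hw, sq])⟩
  · have hgz : g * z ≠ 0 :=
      mul_ne_zero (by rintro rfl; exact hg .zero) (by rintro rfl; exact hz .zero)
    obtain ⟨w, hw⟩ : IsSquare (g * z) := by
      rw [← quadraticChar_one_iff_isSquare hgz, map_mul,
        quadraticChar_neg_one_iff_not_isSquare.mpr hg,
        quadraticChar_neg_one_iff_not_isSquare.mpr hz]
      norm_num
    exact ⟨w, .inr (by rw [hw, sq])⟩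

variable [Fintype K]

lemma exists_card_eq_pow_of_cast_eq_zero {r : ℕ} (hr : r.Prime) (h : (r : K) = 0) :
    ∃ k, Fintype.card K = r ^ k := by
  have := (CharP.charP_iff_prime_eq_zero hr).mpr h
  obtain ⟨k, -, hk⟩ := FiniteField.card K r
  exact ⟨k, hk⟩

lemma card_odd_of_two_ne_zero (h2 : (2 : K) ≠ 0) : Fintype.card K % 2 = 1 :=
  FiniteField.odd_card_of_char_ne_two (ringChar_ne_two_of_two_ne_zero h2)

lemma not_isSquare_five (h2 : (2 : K) ≠ 0)
    (hmod : Fintype.card K % 5 = 2 ∨ Fintype.card K % 5 = 3) : ¬IsSquare (5 : K) := by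
  have hnonres : ∀ ε z : ZMod 5, ε = 1 ∨ ε = -1 → z = 2 ∨ z = 3 → ¬IsSquare (ε * z) := by decide
  have hfive : Fact (Nat.Prime 5) := ⟨Nat.prime_five⟩
  have hsign : ZMod.χ₄ (Fintype.card K) = 1 ∨ ZMod.χ₄ (Fintype.card K) = -1 := by
    rw [ZMod.χ₄_nat_eq_if_mod_four, card_odd_of_two_ne_zero h2]
    split_ifs <;> simp_all
  have hcard : (Fintype.card K : ZMod 5) = 2 ∨ (Fintype.card K : ZMod 5) = 3 := by
    rw [← ZMod.natCast_mod]
    exact hmod.imp (congrArg Nat.cast) (congrArg Nat.cast)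
  rw [← Nat.cast_ofNat, FiniteField.isSquare_odd_prime_iff (ringChar_ne_two_of_two_ne_zero h2)
    (by norm_num), not_ne_iff, quadraticChar_neg_one_iff_not_isSquare]
  exact hnonres _ _ (by rcases hsign with h | h <;> simp [h]) hcard

end QuadraticResidues

section Collisions

variable {K : Type*} [Field K] {A C u : K}

lemma not_injective_quintic_of_thirteen_eq_zero (h13 : (13 : K) = 0) (hu : u ≠ 0) :
    ¬Injective (quintic (5 * u ^ 2) (5 * u ^ 3) (5 * u ^ 4)) := fun hf => hu <| by
  have heq : (5 : K) * u = 0 := hf (by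
    simp only [quintic]
    linear_combination 300 * u ^ 5 * h13)
  linear_combination 8 * heq - 3 * u * h13

lemma not_injective_quintic_of_three_eq_zero (h2 : (2 : K) ≠ 0) (h3 : (3 : K) = 0) (hu : u ≠ 0)
    (hC : C = 0 ∨ C = u ^ 4) : ¬Injective (quintic (5 * u ^ 2) (5 * u ^ 3) C) := fun hf => by
  rcases hC with rfl | rfl
  · have heq : u = -u := hf (by
      simp only [quintic]
      linear_combination 4 * u ^ 5 * h3)
    exact mul_ne_zero h2 hu (by linear_combination heq)
  · exact hu (hf (by
      simp only [quintic]
      linear_combination 4 * u ^ 5 * h3))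

variable [Finite K]

lemma not_injective_quintic_of_seventeen_eq_zero (h17 : (17 : K) = 0) (h5 : ¬IsSquare (5 : K))
    (hu : u ≠ 0) : ¬Injective (quintic (5 * u) 0 (10 * u ^ 2)) := fun hf => hu <| by
  obtain ⟨w, hw | hw⟩ := exists_eq_sq_or_mul_eq_sq h5 u
  · have heq : 3 * w = 0 := hf (by
      subst hw
      simp only [quintic]
      linear_combination 24 * w ^ 5 * h17)
    linear_combination hw + 6 * w * heq - w ^ 2 * h17
  · have heq : 2 * w = 0 := hf (by
      simp only [quintic]
      linear_combination -(w * (32 * (w ^ 2 + 5 * u) + 40 * u)) * hw + 60 * w * u ^ 2 * h17)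
    linear_combination 7 * hw - 2 * u * h17 + 7 * w * (heq * 9 - w * h17)

lemma not_injective_quintic_of_seven_eq_zero (h7 : (7 : K) = 0) (h5 : ¬IsSquare (5 : K))
    (hC : C ≠ 0) : ¬Injective (quintic 0 0 C) := fun hf => by
  obtain ⟨v, hv⟩ : ∃ v, C = v ^ 4 ∨ C = 2 * v ^ 4 ∨ C = 3 * v ^ 4 ∨ C = 6 * v ^ 4 := by
    obtain ⟨w, hw⟩ := exists_eq_sq_or_mul_eq_sq h5 C
    obtain ⟨v, hv | hv⟩ := exists_eq_sq_or_mul_eq_sq h5 w <;> refine ⟨v, ?_⟩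
    · rcases hw with hw | hw
      · exact .inl (by rw [hw, hv]; ring)
      · exact .inr (.inr (.inl (by linear_combination 3 * hw - 2 * C * h7 + 3 * (w + v ^ 2) * hv)))
    · have hw3 : w = 3 * v ^ 2 := by linear_combination 3 * hv - 2 * w * h7
      rcases hw with hw | hw
      · exact .inr (.inl (by rw [hw, hw3]; linear_combination v ^ 4 * h7))
      · exact .inr (.inr (.inr (by
          rw [hw3] at hw
          linear_combination 3 * hw + 3 * v ^ 4 * h7 - 2 * C * h7)))
  have hv0 : v ≠ 0 := by rintro rfl; simp [hC] at hv
  rcases hv with rfl | rfl | rfl | rfl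
  · have heq : 2 * v = 4 * v := hf (by
      simp only [quintic]
      linear_combination -142 * v ^ 5 * h7)
    exact hv0 (by linear_combination 3 * heq + v * h7)
  · have heq : v = 4 * v := hf (by
      simp only [quintic]
      linear_combination -147 * v ^ 5 * h7)
    exact hv0 (by linear_combination 2 * heq + v * h7)
  · have heq : 3 * v = 0 := hf (by
      simp only [quintic]
      linear_combination 36 * v ^ 5 * h7)
    exact hv0 (by linear_combination -2 * heq + v * h7)
  · exact hv0 (hf (by
      simp only [quintic]
      linear_combination v ^ 5 * h7))

end Collisions

section LargeFields

variable {K : Type*} [Field K] {A B C : K}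

lemma exists_eq_five_mul_pow (h5 : (5 : K) ≠ 0) (hB : B ≠ 0) (h : 5 * B ^ 2 = A ^ 3) :
    ∃ u ≠ 0, A = 5 * u ^ 2 ∧ B = 5 * u ^ 3 := by
  have hA : A ≠ 0 := by
    rintro rfl
    exact mul_ne_zero h5 (pow_ne_zero 2 hB) (by rw [h]; ring)
  have hA' : A = 5 * (B / A) ^ 2 := by field_simp; exact h.symm
  refine ⟨B / A, div_ne_zero hB hA, hA', ?_⟩
  calc B = A * (B / A) := by field_simp
    _ = 5 * (B / A) ^ 2 * (B / A) := by rw [← hA']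
    _ = 5 * (B / A) ^ 3 := by ring

variable [Fintype K]

lemma eq_zero_of_bijective_quintic_of_card_mod_five_eq_four (h2 : (2 : K) ≠ 0) (h5 : (5 : K) ≠ 0)
    (hf : Bijective (quintic A B C)) (hmod : Fintype.card K % 5 = 4)
    (hq : 18 < Fintype.card K) : A = 0 ∧ B = 0 ∧ C = 0 := by
  obtain rfl := hermite_relation_one h5 hf hmod (by omega)
  have h11 : (11 : K) ≠ 0 := fun h => by
    obtain ⟨k, hk⟩ := exists_card_eq_pow_of_cast_eq_zero (r := 11) (by norm_num) (mod_cast h)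
    norm_num [hk, Nat.pow_mod] at hmod
  have heq := (mul_eq_zero.mp (hermite_relation_eleven h5 hf hmod (by omega))).resolve_left h11
  have hBC := (mul_eq_zero.mp (hermite_relation_sixteen h5 hf hmod hq)).resolve_left
    (mul_ne_zero h11 (pow_ne_zero 5 h2))
  refine ⟨rfl, ?_⟩
  rcases mul_eq_zero.mp hBC with h | h
  · obtain rfl := pow_eq_zero_iff (by norm_num) |>.mp h
    simpa [h5] using heq
  · obtain rfl := pow_eq_zero_iff (by norm_num) |>.mp h
    simpa using heq

lemma eq_zero_of_bijective_quintic_two_mul (h2 : (2 : K) ≠ 0) (h5 : (5 : K) ≠ 0) {u : K}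
    (hf : Bijective (quintic (5 * u) 0 (10 * u ^ 2))) (hmod : Fintype.card K % 5 = 3)
    (hq : 19 < Fintype.card K) : u = 0 := by
  by_contra hu
  have hrel := hermite_relation_seventeen h5 hf hmod hq
  by_cases h17 : (17 : K) = 0
  · exact not_injective_quintic_of_seventeen_eq_zero h17 (not_isSquare_five h2 (.inr hmod)) hu
      hf.injective
  · refine mul_ne_zero h17 (mul_ne_zero (pow_ne_zero 10 h5) (pow_ne_zero 9 hu)) ?_
    linear_combination -hrel

lemma dickson_relations_of_card_mod_five_eq_three (h2 : (2 : K) ≠ 0) (h5 : (5 : K) ≠ 0)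
    (hf : Bijective (quintic A B C)) (hmod : Fintype.card K % 5 = 3)
    (hq : 19 < Fintype.card K) : 5 * C = A ^ 2 ∧ B = 0 := by
  have hB := (mul_eq_zero.mp (hermite_relation_two h5 hf hmod (by omega))).resolve_left h2
  subst hB
  refine ⟨?_, rfl⟩
  by_cases h7 : (7 : K) = 0
  · have hrel : A ^ 7 * (5 * C - A ^ 2) = 0 := by
      linear_combination -hermite_relation_seventeen h5 hf hmod hq +
        (159375 * A * C ^ 4 - 170000 * A ^ 3 * C ^ 3 + 66300 * A ^ 5 * C ^ 2 - 11365 * A ^ 7 * C +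
          726 * A ^ 9) * h7
    rcases mul_eq_zero.mp hrel with h | h
    · obtain rfl := pow_eq_zero_iff (by norm_num) |>.mp h
      by_contra hC
      refine not_injective_quintic_of_seven_eq_zero h7 (not_isSquare_five h2 (.inr hmod)) ?_
        hf.injective
      rintro rfl
      simp at hC
    · exact sub_eq_zero.mp h
  · have hrel := (mul_eq_zero.mp (hermite_relation_seven h5 hf hmod (by omega))).resolve_left h7
    rcases mul_eq_zero.mp hrel with h | h
    · exact sub_eq_zero.mp h
    · obtain ⟨u, rfl⟩ : ∃ u, A = 5 * u := ⟨A / 5, by field_simp⟩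
      obtain rfl : C = 10 * u ^ 2 := mul_left_cancel₀ h5 (by linear_combination h)
      rw [eq_zero_of_bijective_quintic_two_mul h2 h5 hf hmod hq]
      ring

lemma eq_zero_or_five_mul_sq_eq_cube (h2 : (2 : K) ≠ 0) (h5 : (5 : K) ≠ 0)
    (hf : Bijective (quintic A B C)) (hmod : Fintype.card K % 5 = 2)
    (hq : 10 < Fintype.card K) : B = 0 ∨ 5 * B ^ 2 = A ^ 3 := by
  have hrel : 2 ^ 3 * (B * (5 * B ^ 2 - A ^ 3)) = 0 := by
    linear_combination hermite_relation_eight h5 hf hmod hq -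
      16 * A * B * hermite_relation_three h5 hf hmod (by omega)
  rcases mul_eq_zero.mp ((mul_eq_zero.mp hrel).resolve_left (pow_ne_zero 3 h2)) with h | h
  · exact .inl h
  · exact .inr (sub_eq_zero.mp h)

lemma quintic_linear_coeff_eq_zero_of_three_eq_zero (h2 : (2 : K) ≠ 0) (h3 : (3 : K) = 0)
    (hf : Bijective (quintic 0 0 C)) (hmod : Fintype.card K % 5 = 2)
    (hq : 15 < Fintype.card K) : C = 0 := by
  have h5 : (5 : K) ≠ 0 := fun h => h2 (by linear_combination h - h3)
  obtain ⟨k, hk⟩ := exists_card_eq_pow_of_cast_eq_zero (r := 3) (by norm_num) (mod_cast h3)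
  obtain ⟨t, ht⟩ : ∃ t, 5 * t = Fintype.card K + 43 := ⟨(Fintype.card K + 43) / 5, by omega⟩
  have hcoeff : quinticPowCoeff 0 0 C t 44 = 0 := by
    rcases lt_or_ge 45 (Fintype.card K) with hlarge | hsmall
    · exact quinticPowCoeff_eq_zero hf ht hlarge
    · have hk3 : k = 3 := by
        have hk4 : k < 4 := (Nat.pow_lt_pow_iff_right (by norm_num : 1 < 3)).mp (by omega)
        interval_cases k <;> omega
      obtain rfl : t = 14 := by rw [hk, hk3] at ht; omega
      have hsum :=
        sum_quinticPowCoeff_eq_zero hf (t := 14) (by norm_num) (by rw [hk, hk3]; norm_num)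
      rw [hk, hk3, show (range (4 * 14 + 1)).filter (3 ^ 3 - 1 ∣ 5 * 14 - ·) = {18, 44} by decide,
        sum_pair (by norm_num)] at hsum
      simpa [quinticPowCoeff_zero_zero] using hsum
  have hchoose := five_pow_mul_cast_choose h5 ht 11 13 1709981 (by omega)
    (by norm_num [prod_range_succ, Nat.factorial])
  rw [quinticPowCoeff_zero_zero, if_pos (by norm_num)] at hcoeff
  push_cast at hchoose
  refine pow_eq_zero_iff (by norm_num : 11 ≠ 0) |>.mp ?_
  linear_combination 569994 * C ^ 11 * h3 + C ^ 11 * hchoose - 5 ^ 13 * hcoeff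

lemma five_mul_eq_sq_of_three_eq_zero (h2 : (2 : K) ≠ 0) (h3 : (3 : K) = 0)
    (hf : Bijective (quintic A 0 C)) (hmod : Fintype.card K % 5 = 2)
    (hq : 15 < Fintype.card K) : 5 * C = A ^ 2 := by
  have h5 : (5 : K) ≠ 0 := fun h => h2 (by linear_combination h - h3)
  rcases eq_or_ne A 0 with rfl | hA
  · rw [quintic_linear_coeff_eq_zero_of_three_eq_zero h2 h3 hf hmod hq]
    ring
  · have hrel : A * ((C + A ^ 2) * ((C - A ^ 2) ^ 2 + A ^ 4)) = 0 := by
      linear_combination -hermite_relation_thirteen h5 hf hmod hq +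
        (21667 * A * C ^ 3 - 15167 * A ^ 3 * C ^ 2 + 3640 * A ^ 5 * C - 294 * A ^ 7) * h3
    rcases mul_eq_zero.mp ((mul_eq_zero.mp hrel).resolve_left hA) with h | h
    · linear_combination 5 * h - 2 * A ^ 2 * h3
    · refine absurd (eq_zero_of_sq_eq_mul_sq (not_isSquare_five h2 (.inl hmod))
        (r := C - A ^ 2) (s := A ^ 2) ?_) (pow_ne_zero 2 hA)
      linear_combination h - 2 * A ^ 4 * h3

lemma quadratic_coeff_eq_zero_of_card_mod_five_eq_two (h2 : (2 : K) ≠ 0) (h5 : (5 : K) ≠ 0)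
    (hf : Bijective (quintic A B C)) (hmod : Fintype.card K % 5 = 2)
    (hq : 15 < Fintype.card K) : B = 0 := by
  by_contra hB
  obtain ⟨u, hu, rfl, rfl⟩ := exists_eq_five_mul_pow h5 hB
    ((eq_zero_or_five_mul_sq_eq_cube h2 h5 hf hmod (by omega)).resolve_left hB)
  have hthirteen := hermite_relation_thirteen h5 hf hmod hq
  by_cases h3 : (3 : K) = 0
  · have hrel : u ^ 2 * (C ^ 2 * (C - u ^ 4)) = 0 := by
      linear_combination hthirteen + (-108333 * u ^ 2 * C ^ 3 + 1083333 * u ^ 6 * C ^ 2 +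
        17062500 * u ^ 10 * C - 95468750 * u ^ 14) * h3
    refine not_injective_quintic_of_three_eq_zero h2 h3 hu ?_ hf.injective
    simpa [hu, sub_eq_zero] using hrel
  · have hthree := (mul_eq_zero.mp (hermite_relation_three h5 hf hmod (by omega))).resolve_left h3
    obtain rfl : C = 5 * u ^ 4 := mul_left_cancel₀ h5 (by linear_combination hthree)
    by_cases h13 : (13 : K) = 0
    · exact not_injective_quintic_of_thirteen_eq_zero h13 hu hf.injective
    · refine mul_ne_zero (mul_ne_zero h2 h13)
        (mul_ne_zero (pow_ne_zero 8 h5) (pow_ne_zero 14 hu)) ?_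
      linear_combination -hthirteen

lemma dickson_relations_of_card_mod_five_eq_two (h2 : (2 : K) ≠ 0) (h5 : (5 : K) ≠ 0)
    (hf : Bijective (quintic A B C)) (hmod : Fintype.card K % 5 = 2)
    (hq : 15 < Fintype.card K) : 5 * C = A ^ 2 ∧ B = 0 := by
  obtain rfl := quadratic_coeff_eq_zero_of_card_mod_five_eq_two h2 h5 hf hmod hq
  refine ⟨?_, rfl⟩
  by_cases h3 : (3 : K) = 0
  · exact five_mul_eq_sq_of_three_eq_zero h2 h3 hf hmod hq
  · exact sub_eq_zero.mp
      ((mul_eq_zero.mp (hermite_relation_three h5 hf hmod (by omega))).resolve_left h3)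

end LargeFields

section PrimeFields

/-- Dickson's list of the coefficients for which the reduced quintic permutes the field with `q`
elements, for `q` odd, prime to `5` and not congruent to `1` modulo `5`, without `x ^ 5 + x` over
the field with three elements, where this polynomial is linear as a function. -/
def IsDicksonQuintic {R : Type*} [CommRing R] (q : ℕ) (A B C : R) : Prop :=
  (A = 0 ∧ C = 0 ∧ B = 0) ∨
  ((q % 5 = 2 ∨ q % 5 = 3) ∧ 5 * C = A ^ 2 ∧ B = 0) ∨
  (q = 9 ∧ A = 0 ∧ B = 0 ∧ C ^ 2 = -1) ∨
  (q = 3 ∧ A = 1 ∧ B = 0 ∧ C = 0) ∨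
  (q = 3 ∧ A = 2 ∧ B = 0 ∧ C = 1) ∨
  (q = 7 ∧ A = 0 ∧ C = 0 ∧ (B = 2 ∨ B = -2)) ∨
  (q = 7 ∧ (A = 3 ∨ A = 5 ∨ A = 6) ∧ C = 3 * A ^ 2 ∧ (B = 1 ∨ B = -1)) ∨
  (q = 13 ∧ (A = 2 ∨ A = -2 ∨ A = 5 ∨ A = -5 ∨ A = 6 ∨ A = -6) ∧ C = 3 * A ^ 2 ∧ B = 0)

instance {R : Type*} [CommRing R] [DecidableEq R] (q : ℕ) (A B C : R) :
    Decidable (IsDicksonQuintic q A B C) := by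
  unfold IsDicksonQuintic
  infer_instance

section Transport

variable {R S : Type*} [CommRing R] [CommRing S]

lemma isDicksonQuintic_map_iff {G : Type*} [FunLike G R S] [RingHomClass G R S] {σ : G}
    (hσ : Injective σ) (q : ℕ) (A B C : R) :
    IsDicksonQuintic q (σ A) (σ B) (σ C) ↔ IsDicksonQuintic q A B C := by
  simp only [IsDicksonQuintic, ← hσ.eq_iff, map_zero, map_one, map_neg, map_mul, map_pow,
    map_ofNat]

lemma bijective_quintic_map_iff (σ : R ≃+* S) (A B C : R) :
    Bijective (quintic (σ A) (σ B) (σ C)) ↔ Bijective (quintic A B C) := by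
  have hcomm : quintic (σ A) (σ B) (σ C) ∘ σ = σ ∘ quintic A B C := by
    ext x
    simp [quintic]
  rw [← Bijective.of_comp_iff _ σ.bijective, hcomm, Bijective.of_comp_iff' σ.bijective]

end Transport

set_option maxRecDepth 100000 in
lemma bijective_quintic_zmod_three_iff (A B C : ZMod 3) : Bijective (quintic A B C) ↔
    IsDicksonQuintic 3 A B C ∨ A = 0 ∧ B = 0 ∧ C = 1 := by
  rw [← Finite.injective_iff_bijective]
  decide +revert

set_option maxRecDepth 1000000 in
lemma bijective_quintic_zmod_seven_iff (A B C : ZMod 7) : Bijective (quintic A B C) ↔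
    IsDicksonQuintic 7 A B C := by
  rw [← Finite.injective_iff_bijective]
  decide +revert

set_option maxRecDepth 100000 in
lemma bijective_quintic_zmod_thirteen_iff (A : ZMod 13) : Bijective (quintic A 0 (3 * A ^ 2)) ↔
    IsDicksonQuintic 13 A 0 (3 * A ^ 2) := by
  rw [← Finite.injective_iff_bijective]
  decide +revert

variable {K : Type*} [Field K] [Fintype K]

lemma bijective_quintic_iff_of_card_eq_three (hK : Fintype.card K = 3) (A B C : K) :
    Bijective (quintic A B C) ↔ IsDicksonQuintic 3 A B C ∨ A = 0 ∧ B = 0 ∧ C = 1 := by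
  let σ := ZMod.ringEquivOfPrime K Nat.prime_three hK
  obtain ⟨A, rfl⟩ := σ.surjective A
  obtain ⟨B, rfl⟩ := σ.surjective B
  obtain ⟨C, rfl⟩ := σ.surjective C
  rw [bijective_quintic_map_iff, bijective_quintic_zmod_three_iff,
    isDicksonQuintic_map_iff σ.injective]
  simp only [EmbeddingLike.map_eq_zero_iff, EmbeddingLike.map_eq_one_iff]

lemma bijective_quintic_iff_of_card_eq_seven (hK : Fintype.card K = 7) (A B C : K) :
    Bijective (quintic A B C) ↔ IsDicksonQuintic 7 A B C := by
  let σ := ZMod.ringEquivOfPrime K (by norm_num) hK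
  obtain ⟨A, rfl⟩ := σ.surjective A
  obtain ⟨B, rfl⟩ := σ.surjective B
  obtain ⟨C, rfl⟩ := σ.surjective C
  rw [bijective_quintic_map_iff, bijective_quintic_zmod_seven_iff,
    isDicksonQuintic_map_iff σ.injective]

lemma bijective_quintic_iff_of_card_eq_thirteen (hK : Fintype.card K = 13) (A : K) :
    Bijective (quintic A 0 (3 * A ^ 2)) ↔ IsDicksonQuintic 13 A 0 (3 * A ^ 2) := by
  let σ := ZMod.ringEquivOfPrime K (by norm_num) hK
  obtain ⟨A, rfl⟩ := σ.surjective A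
  have hcoeff : 3 * σ A ^ 2 = σ (3 * A ^ 2) := by simp only [map_mul, map_pow, map_ofNat]
  rw [hcoeff, ← map_zero σ, bijective_quintic_map_iff, bijective_quintic_zmod_thirteen_iff,
    isDicksonQuintic_map_iff σ.injective]

end PrimeFields

section Classification

variable {K : Type*} [Field K] {A B C : K}

/-- Up to scaling, this is the Dickson polynomial `D₅(x, α) = x⁵ - 5αx³ + 5α²x`. With
`v = xy + α` and `w = x² + y² - 3α`, the quotient of `D₅(x, α) - D₅(y, α)` by `x - y` is
`w² + wv - v²`, of discriminant `5v²`. -/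
lemma bijective_quintic_of_five_mul_eq_sq [Finite K] (h5 : (5 : K) ≠ 0)
    (h5sq : ¬IsSquare (5 : K)) (hC : 5 * C = A ^ 2) : Bijective (quintic A 0 C) := by
  obtain ⟨α, rfl⟩ : ∃ α, A = -5 * α := ⟨-A / 5, by field_simp⟩
  obtain rfl : C = 5 * α ^ 2 := mul_left_cancel₀ h5 (by linear_combination hC)
  refine Finite.injective_iff_bijective.mp fun x y hxy => by_contra fun hne => ?_
  have hfactor : (x - y) * ((x ^ 2 + y ^ 2 - 3 * α) ^ 2 + (x ^ 2 + y ^ 2 - 3 * α) * (x * y + α) -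
      (x * y + α) ^ 2) = 0 := by
    simp only [quintic] at hxy
    linear_combination hxy
  have hform := (mul_eq_zero.mp hfactor).resolve_left (sub_ne_zero.mpr hne)
  have hv : x * y + α = 0 := eq_zero_of_sq_eq_mul_sq h5sq
    (r := 2 * (x ^ 2 + y ^ 2 - 3 * α) + (x * y + α)) (by linear_combination 4 * hform)
  have hw : x ^ 2 + y ^ 2 - 3 * α = 0 := by simpa [hv] using hform
  have hadd : x + y = 0 := eq_zero_of_sq_eq_mul_sq h5sq (r := x - y)
    (by linear_combination -4 * hw - 12 * hv)
  have hsub : x - y = 0 := pow_eq_zero_iff two_ne_zero |>.mp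
    (by linear_combination 5 * hadd * (x + y) - 4 * hw - 12 * hv)
  exact hne (sub_eq_zero.mp hsub)

variable [Fintype K]

lemma bijective_pow_of_coprime {m : ℕ} (hm : m.Coprime (Fintype.card K - 1)) (hm0 : m ≠ 0) :
    Bijective fun x : K => x ^ m := by
  refine Finite.injective_iff_bijective.mp fun x y (hxy : x ^ m = y ^ m) => ?_
  rcases eq_or_ne y 0 with rfl | hy
  · rwa [zero_pow hm0, pow_eq_zero_iff hm0] at hxy
  · have hx : x ≠ 0 := by
      rintro rfl
      exact pow_ne_zero m hy (by rw [← hxy, zero_pow hm0])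
    have hroot : (x / y) ^ m = 1 := by rw [div_pow, hxy, div_self (pow_ne_zero m hy)]
    have hone := pow_gcd_eq_one.mpr
      ⟨hroot, FiniteField.pow_card_sub_one_eq_one _ (div_ne_zero hx hy)⟩
    rwa [hm, pow_one, div_eq_one_iff_eq hy] at hone

lemma three_eq_zero_of_card_eq_nine (hK : Fintype.card K = 9) : (3 : K) = 0 := by
  have h9 : ((9 : ℕ) : K) = 0 := hK ▸ Nat.cast_card_eq_zero K
  push_cast at h9
  exact pow_eq_zero_iff two_ne_zero |>.mp (by linear_combination h9)

lemma bijective_quintic_of_card_eq_nine (hK : Fintype.card K = 9) (hC : C ^ 2 = -1) :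
    Bijective (quintic 0 0 C) := by
  have h3 : (3 : K) = 0 := three_eq_zero_of_card_eq_nine hK
  have hpow (x : K) : x ^ 9 = x := hK ▸ FiniteField.pow_card x
  have hfour (x : K) : quintic 0 0 C x ^ 4 = -x ^ 4 := by
    simp only [quintic]
    linear_combination (x ^ 11 + 4 * x ^ 7 * C + (6 * C ^ 2 + 1) * x ^ 3) * hpow x +
      (4 * x ^ 8 * C + x ^ 4 * (C ^ 2 + 5)) * hC - x ^ 4 * h3
  refine Finite.injective_iff_bijective.mp fun x y hxy => ?_
  have hxy4 : x ^ 4 = y ^ 4 := neg_injective (by rw [← hfour, hxy, hfour])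
  rcases eq_or_ne x 0 with rfl | hx
  · exact (pow_eq_zero_iff four_ne_zero |>.mp (by rw [← hxy4, zero_pow four_ne_zero])).symm
  · have hne : x ^ 4 + C ≠ 0 := fun h => hx <| by
      linear_combination x * h3 + hpow x - x * (x ^ 4 - C) * h - x * hC
    refine mul_right_cancel₀ hne ?_
    simp only [quintic] at hxy
    linear_combination hxy - y * hxy4

lemma sq_eq_neg_one_of_card_eq_nine (hK : Fintype.card K = 9) (hf : Bijective (quintic A B C)) :
    A = 0 ∧ B = 0 ∧ (C = 0 ∨ C ^ 2 = -1) := by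
  have h3 : (3 : K) = 0 := three_eq_zero_of_card_eq_nine hK
  have h5 : (5 : K) ≠ 0 := fun h => one_ne_zero (α := K) (by linear_combination 2 * h3 - h)
  obtain rfl := hermite_relation_one h5 hf (by omega) (by omega)
  have hfour := sum_quinticPowCoeff_eq_zero hf (t := 4) (by norm_num) (by omega)
  have hfive := sum_quinticPowCoeff_eq_zero hf (t := 5) (by norm_num) (by omega)
  rw [hK, show (range (4 * 4 + 1)).filter (9 - 1 ∣ 5 * 4 - ·) = {4, 12} by decide,
    sum_pair (by norm_num), quinticPowCoeff_four, quinticPowCoeff_twelve] at hfour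
  rw [hK, show (range (4 * 5 + 1)).filter (9 - 1 ∣ 5 * 5 - ·) = {1, 9, 17} by decide,
    sum_insert (by decide), sum_pair (by norm_num), quinticPowCoeff_one, quinticPowCoeff_nine,
    quinticPowCoeff_seventeen] at hfive
  norm_num [Nat.choose] at hfour hfive
  obtain rfl : B = 0 := pow_eq_zero_iff (by norm_num : 7 ≠ 0) |>.mp (by
    linear_combination B ^ 3 * hfour - 4 * C * hfive + 12 * C * B ^ 3 * (C ^ 2 + 1) * h3)
  have hprod : C * (C ^ 2 + 1) = 0 := by
    linear_combination hfour - C * (C ^ 2 + 1) * h3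
  exact ⟨rfl, rfl, (mul_eq_zero.mp hprod).imp_right eq_neg_of_add_eq_zero_left⟩

lemma isDicksonQuintic_of_card_mod_five_eq_three (h2 : (2 : K) ≠ 0) (h5 : (5 : K) ≠ 0)
    (hf : Bijective (quintic A B C)) (hmod : Fintype.card K % 5 = 3) :
    IsDicksonQuintic (Fintype.card K) A B C ∨ Fintype.card K = 3 ∧ A = 0 ∧ B = 0 ∧ C = 1 := by
  have hodd := card_odd_of_two_ne_zero h2
  by_cases hq3 : Fintype.card K = 3
  · rw [hq3]
    exact ((bijective_quintic_iff_of_card_eq_three hq3 A B C).mp hf).imp_right (⟨rfl, ·⟩)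
  refine .inl ?_
  by_cases hq13 : Fintype.card K = 13
  · have h13 : ((13 : ℕ) : K) = 0 := hq13 ▸ Nat.cast_card_eq_zero K
    push_cast at h13
    have h7 : (7 : K) ≠ 0 := fun h => one_ne_zero (α := K) (by linear_combination 2 * h - h13)
    obtain rfl : B = 0 := (mul_eq_zero.mp
      (hermite_relation_two h5 hf hmod (by omega))).resolve_left h2
    have hrel := (mul_eq_zero.mp (hermite_relation_seven h5 hf hmod (by omega))).resolve_left h7
    rcases mul_eq_zero.mp hrel with h | h
    · exact .inr (.inl ⟨.inr hmod, sub_eq_zero.mp h, rfl⟩)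
    · obtain rfl : C = 3 * A ^ 2 := by linear_combination -5 * h - (A ^ 2 - 2 * C) * h13
      exact hq13 ▸ (bijective_quintic_iff_of_card_eq_thirteen hq13 A).mp hf
  · exact .inr (.inl ⟨.inr hmod, dickson_relations_of_card_mod_five_eq_three h2 h5 hf hmod
      (by omega)⟩)

lemma isDicksonQuintic_of_bijective (h2 : (2 : K) ≠ 0) (h5 : (5 : K) ≠ 0)
    (hcop : Nat.Coprime 5 (Fintype.card K - 1)) (hf : Bijective (quintic A B C)) :
    IsDicksonQuintic (Fintype.card K) A B C ∨ Fintype.card K = 3 ∧ A = 0 ∧ B = 0 ∧ C = 1 := by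
  have hodd := card_odd_of_two_ne_zero h2
  have hfive : Fact (Nat.Prime 5) := ⟨Nat.prime_five⟩
  have hmod0 : ¬5 ∣ Fintype.card K := by
    rw [← prime_dvd_char_iff_dvd_card, ← isUnit_iff_not_dvd_char, isUnit_iff_ne_zero]
    exact_mod_cast h5
  have hmod1 : ¬5 ∣ Fintype.card K - 1 := (Nat.prime_five.coprime_iff_not_dvd).mp hcop
  have hmod : Fintype.card K % 5 = 2 ∨ Fintype.card K % 5 = 3 ∨ Fintype.card K % 5 = 4 := by omega
  rcases hmod with hmod | hmod | hmod
  · refine .inl ?_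
    by_cases hq : Fintype.card K = 7
    · exact hq ▸ (bijective_quintic_iff_of_card_eq_seven hq A B C).mp hf
    · exact .inr (.inl ⟨.inl hmod, dickson_relations_of_card_mod_five_eq_two h2 h5 hf hmod
        (by omega)⟩)
  · exact isDicksonQuintic_of_card_mod_five_eq_three h2 h5 hf hmod
  · refine .inl ?_
    by_cases hq : Fintype.card K = 9
    · obtain ⟨hA, hB, hC | hC⟩ := sq_eq_neg_one_of_card_eq_nine hq hf
      · exact .inl ⟨hA, hC, hB⟩
      · exact .inr (.inr (.inl ⟨hq, hA, hB, hC⟩))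
    · obtain ⟨hA, hB, hC⟩ := eq_zero_of_bijective_quintic_of_card_mod_five_eq_four h2 h5 hf hmod
        (by omega)
      exact .inl ⟨hA, hC, hB⟩

theorem bijective_quintic_iff (h2 : (2 : K) ≠ 0) (h5 : (5 : K) ≠ 0)
    (hcop : Nat.Coprime 5 (Fintype.card K - 1)) : Bijective (quintic A B C) ↔
    IsDicksonQuintic (Fintype.card K) A B C ∨ Fintype.card K = 3 ∧ A = 0 ∧ B = 0 ∧ C = 1 := by
  refine ⟨isDicksonQuintic_of_bijective h2 h5 hcop, ?_⟩
  by_cases hq3 : Fintype.card K = 3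
  · rw [bijective_quintic_iff_of_card_eq_three hq3, hq3]
    exact Or.imp_right And.right
  rintro (hD | ⟨hq, -⟩)
  swap
  · exact absurd hq hq3
  have hcases := hD
  rcases hcases with ⟨rfl, rfl, rfl⟩ | ⟨hmod, hC, rfl⟩ | ⟨hq, rfl, rfl, hC⟩ | ⟨hq, -⟩ | ⟨hq, -⟩ |
    ⟨hq, -⟩ | ⟨hq, -⟩ | ⟨hq, -, rfl, rfl⟩
  · have hpow : quintic (0 : K) 0 0 = fun x => x ^ 5 := funext fun x => by simp [quintic]
    exact hpow ▸ bijective_pow_of_coprime hcop (by norm_num)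
  · exact bijective_quintic_of_five_mul_eq_sq h5 (not_isSquare_five h2 hmod) hC
  · exact bijective_quintic_of_card_eq_nine hq hC
  · exact absurd hq hq3
  · exact absurd hq hq3
  · exact (bijective_quintic_iff_of_card_eq_seven hq _ _ _).mpr (hq ▸ hD)
  · exact (bijective_quintic_iff_of_card_eq_seven hq _ _ _).mpr (hq ▸ hD)
  · exact (bijective_quintic_iff_of_card_eq_thirteen hq _).mpr (hq ▸ hD)

end Classification

section NormReduction

open Polynomial Module

lemma bijective_const_mul_iff {α F : Type*} [Field F] {b : F} (hb : b ≠ 0) (f : α → F) :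
    Bijective (fun x => b * f x) ↔ Bijective f :=
  Bijective.of_comp_iff' (Equiv.mulLeft₀ b hb).bijective f

variable {K F : Type*} [Field K] [Field F] [Finite F] [Algebra K F]

-- The fibres of the norm over `K \ {0}` are torsors under the elements of norm `1`, and these
-- commute with `x ↦ x * φ (N x)`.
lemma bijective_mul_comp_norm_iff (φ : K → F) :
    Bijective (fun x : F => x * φ (Algebra.norm K x)) ↔
      Bijective fun c : K => c * Algebra.norm K (φ c) := by
  have : Finite K := Finite.of_injective _ (algebraMap K F).injective
  rw [← Finite.injective_iff_bijective, ← Finite.injective_iff_bijective]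
  refine ⟨fun hf c c' hcc => ?_, fun hg x y hxy => ?_⟩
  · obtain ⟨x, rfl⟩ := FiniteField.norm_surjective K F c
    obtain ⟨y, rfl⟩ := FiniteField.norm_surjective K F c'
    simp only [← map_mul] at hcc
    by_cases hy : y * φ (Algebra.norm K y) = 0
    · rw [hy, Algebra.norm_zero, Algebra.norm_eq_zero_iff] at hcc
      rw [hf (hcc.trans hy.symm)]
    · let w := x * φ (Algebra.norm K x) / (y * φ (Algebra.norm K y))
      have hw : Algebra.norm K w = 1 := by
        have hne : Algebra.norm K (y * φ (Algebra.norm K y)) ≠ 0 := by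
          rwa [Algebra.norm_ne_zero_iff]
        rw [← mul_left_inj' hne, ← map_mul, div_mul_cancel₀ _ hy, hcc, one_mul]
      have hx : x = w * y := hf <| by
        simp only [map_mul, hw, one_mul, mul_assoc]
        exact (div_mul_cancel₀ _ hy).symm
      rw [hx, map_mul, hw, one_mul]
  · have hnorm : Algebra.norm K x = Algebra.norm K y := hg <| by
      simpa only [map_mul] using congrArg (Algebra.norm K) hxy
    simp only [hnorm] at hxy
    by_cases hφ : φ (Algebra.norm K y) = 0
    · have hy : Algebra.norm K y = 0 :=
        hg (by simp only [hφ, Algebra.norm_zero, mul_zero, zero_mul])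
      rw [Algebra.norm_eq_zero_iff.mp (hnorm.trans hy), Algebra.norm_eq_zero_iff.mp hy]
    · exact mul_right_cancel₀ hφ hxy

variable (K) {a : F}

lemma bijective_inv_mul_pow_iff (ha : a ≠ 0) :
    Bijective (fun x : F => a⁻¹ * x ^ ((Nat.card F - 1) / (Nat.card K - 1) + 1)) ↔
      Bijective fun c : K => c ^ (finrank K F + 1) := by
  simp only [bijective_const_mul_iff (inv_ne_zero ha), pow_succ', ← Algebra.norm_algebraMap,
    ← FiniteField.algebraMap_norm_eq_pow]
  exact bijective_mul_comp_norm_iff _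

lemma bijective_inv_mul_pow_add_self_iff (ha : a ≠ 0) :
    Bijective (fun x : F => a⁻¹ * x ^ ((Nat.card F - 1) / (Nat.card K - 1) + 1) + x) ↔
      Bijective fun c : K => c * Algebra.norm K (algebraMap K F c + a) := by
  rw [← bijective_mul_comp_norm_iff fun c : K => algebraMap K F c + a,
    ← bijective_const_mul_iff (inv_ne_zero ha) fun x : F => x * _]
  refine iff_of_eq (congrArg _ (funext fun x => ?_))
  rw [FiniteField.algebraMap_norm_eq_pow, mul_add x, mul_add, mul_comm x a,
    inv_mul_cancel_left₀ ha, pow_succ']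

/-- The polynomial `∏ (X + a ^ q ^ i)` over `i < r`. When `F` has degree `r` over its subfield with
`q` elements, its coefficients are the elementary symmetric functions of the conjugates of `a`. -/
noncomputable def conjugatePolynomial (q r : ℕ) (a : F) : F[X] := ∏ i ∈ range r, (X + C (a ^ q ^ i))

lemma mem_range_algebraMap_of_pow_card_eq {x : F} (hx : x ^ Nat.card K = x) :
    x ∈ Set.range (algebraMap K F) := by
  have : Finite K := Finite.of_injective _ (algebraMap K F).injective
  have : Fintype K := Fintype.ofFinite K
  rw [IsGalois.mem_range_algebraMap_iff_fixed]
  intro σ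
  obtain ⟨n, rfl⟩ := (FiniteField.bijective_frobeniusAlgEquivOfAlgebraic_pow K F).surjective σ
  have hfix : IsFixedPt (FiniteField.frobeniusAlgEquivOfAlgebraic K F) x := by
    simpa [IsFixedPt, FiniteField.coe_frobeniusAlgEquivOfAlgebraic, Nat.card_eq_fintype_card]
      using hx
  exact (congrFun (AlgEquiv.coe_pow _ _) x).trans (hfix.iterate n).eq

lemma conjugatePolynomial_mem_lifts (a : F) :
    conjugatePolynomial (Nat.card K) (finrank K F) a ∈ lifts (algebraMap K F) := by
  have : Finite K := Finite.of_injective _ (algebraMap K F).injective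
  have : Fintype K := Fintype.ofFinite K
  let φ : F →+* F := FiniteField.frobeniusAlgHom K F
  have hφ (x : F) : φ x = x ^ Nat.card K := by simp [φ]
  have hcard : a ^ Nat.card K ^ finrank K F = a := by
    have : Fintype F := Fintype.ofFinite F
    rw [← Module.natCard_eq_pow_finrank, Nat.card_eq_fintype_card, FiniteField.pow_card]
  have hfix : (conjugatePolynomial (Nat.card K) (finrank K F) a).map φ =
      conjugatePolynomial (Nat.card K) (finrank K F) a := by
    have hshift := (prod_range_succ (fun i => X + C (a ^ Nat.card K ^ i)) (finrank K F)).symm.trans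
      (prod_range_succ' _ _)
    rw [hcard, pow_zero, pow_one] at hshift
    simp only [conjugatePolynomial, Polynomial.map_prod, Polynomial.map_add, map_X, map_C, hφ,
      ← pow_mul, ← pow_succ]
    exact (mul_right_cancel₀ (X_add_C_ne_zero a) hshift).symm
  refine (lifts_iff_coeff_lifts _).mpr fun n => mem_range_algebraMap_of_pow_card_eq K ?_
  rw [← hφ, ← coeff_map, hfix]

lemma norm_algebraMap_add_eq_eval {P : K[X]} {a : F}
    (hP : P.map (algebraMap K F) = conjugatePolynomial (Nat.card K) (finrank K F) a) (c : K) :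
    Algebra.norm K (algebraMap K F c + a) = P.eval c := by
  have : Finite K := Finite.of_injective _ (algebraMap K F).injective
  have : Fintype K := Fintype.ofFinite K
  apply (algebraMap K F).injective
  rw [FiniteField.algebraMap_norm_eq_prod_pow, ← eval_map_apply, hP, conjugatePolynomial,
    eval_prod]
  refine prod_congr rfl fun i _ => ?_
  have hi := map_add (FiniteField.frobeniusAlgHom K F ^ i) (algebraMap K F c) a
  rw [AlgHom.commutes, AlgHom.coe_pow, FiniteField.coe_frobeniusAlgHom, pow_iterate] at hi
  simpa using hi

end NormReduction

section Depression

/-- The coefficient of `x ^ 3` in the reduced quintic that `x (x ^ 4 + l₁ x ^ 3 + ⋯ + l₄)` becomes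
after substituting `x - l₁ / 5` for `x`. -/
def depressedCubicCoeff {K : Type*} [Field K] (l₁ l₂ : K) : K := -(2 / 5) * l₁ ^ 2 + l₂

/-- The coefficient of `x ^ 2` in the reduced quintic that `x (x ^ 4 + l₁ x ^ 3 + ⋯ + l₄)` becomes
after substituting `x - l₁ / 5` for `x`. -/
def depressedQuadraticCoeff {K : Type*} [Field K] (l₁ l₂ l₃ : K) : K :=
  l₃ + 4 / 25 * l₁ ^ 3 - 3 / 5 * l₁ * l₂

/-- The coefficient of `x` in the reduced quintic that `x (x ^ 4 + l₁ x ^ 3 + ⋯ + l₄)` becomes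
after substituting `x - l₁ / 5` for `x`. -/
def depressedLinearCoeff {K : Type*} [Field K] (l₁ l₂ l₃ l₄ : K) : K :=
  -(2 / 5) * l₁ * l₃ - 3 / 125 * l₁ ^ 4 + 3 / 25 * l₂ * l₁ ^ 2 + l₄

section

variable {K : Type*} [Field K] (l₁ l₂ l₃ l₄ : K)

lemma quintic_depressed_add (h5 : (5 : K) ≠ 0) (x : K) :
    quintic (depressedCubicCoeff l₁ l₂) (depressedQuadraticCoeff l₁ l₂ l₃)
        (depressedLinearCoeff l₁ l₂ l₃ l₄) (x + l₁ / 5) =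
      x * (x ^ 4 + l₁ * x ^ 3 + l₂ * x ^ 2 + l₃ * x + l₄) +
        quintic (depressedCubicCoeff l₁ l₂) (depressedQuadraticCoeff l₁ l₂ l₃)
          (depressedLinearCoeff l₁ l₂ l₃ l₄) (l₁ / 5) := by
  obtain ⟨u, rfl⟩ : ∃ u, l₁ = 5 * u := ⟨l₁ / 5, (mul_div_cancel₀ l₁ h5).symm⟩
  have h25 : (25 : K) = 5 ^ 2 := by norm_num
  have h125 : (125 : K) = 5 ^ 3 := by norm_num
  simp only [quintic, depressedCubicCoeff, depressedQuadraticCoeff, depressedLinearCoeff, h25, h125]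
  field_simp
  ring

lemma bijective_quintic_depressed_iff (h5 : (5 : K) ≠ 0) :
    Bijective (quintic (depressedCubicCoeff l₁ l₂) (depressedQuadraticCoeff l₁ l₂ l₃)
        (depressedLinearCoeff l₁ l₂ l₃ l₄)) ↔
      Bijective fun x : K => x * (x ^ 4 + l₁ * x ^ 3 + l₂ * x ^ 2 + l₃ * x + l₄) := by
  rw [← Bijective.of_comp_iff _ (Equiv.addRight (l₁ / 5)).bijective,
    ← Bijective.of_comp_iff' (Equiv.addRight (quintic _ _ _ (l₁ / 5))).bijective fun x : K => x * _]
  exact iff_of_eq (congrArg _ (funext (quintic_depressed_add l₁ l₂ l₃ l₄ h5)))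

variable {l₁ l₂ l₃ l₄}

lemma depressed_coeffs_of_three_eq_zero (h3 : (3 : K) = 0) :
    depressedCubicCoeff l₁ l₂ = l₂ - l₁ ^ 2 ∧
      depressedQuadraticCoeff l₁ l₂ l₃ = l₃ + l₁ ^ 3 ∧
      depressedLinearCoeff l₁ l₂ l₃ l₄ = l₄ - l₁ * l₃ := by
  have h5 : (5 : K) = -1 := by linear_combination 2 * h3
  have h25 : (25 : K) = 1 := by linear_combination 8 * h3
  have h2 : (2 : K) = -1 := by linear_combination h3
  have h4 : (4 : K) = 1 := by linear_combination h3
  simp only [depressedCubicCoeff, depressedQuadraticCoeff, depressedLinearCoeff, h2, h3, h4, h5,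
    h25]
  refine ⟨?_, ?_, ?_⟩ <;> ring

lemma depressed_coeffs_of_seven_eq_zero (h7 : (7 : K) = 0) :
    depressedCubicCoeff l₁ l₂ = l₁ ^ 2 + l₂ ∧
      depressedQuadraticCoeff l₁ l₂ l₃ = l₃ + l₁ ^ 3 - 2 * l₁ * l₂ ∧
      depressedLinearCoeff l₁ l₂ l₃ l₄ = l₁ * l₃ + 3 * l₁ ^ 4 - l₂ * l₁ ^ 2 + l₄ := by
  have h5 : (5 : K)⁻¹ = 3 := inv_eq_of_mul_eq_one_right (by linear_combination 2 * h7)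
  have h25 : (25 : K)⁻¹ = 2 := inv_eq_of_mul_eq_one_right (by linear_combination 7 * h7)
  have h125 : (125 : K)⁻¹ = -1 := inv_eq_of_mul_eq_one_right (by linear_combination -18 * h7)
  simp only [depressedCubicCoeff, depressedQuadraticCoeff, depressedLinearCoeff, div_eq_mul_inv,
    h5, h25, h125]
  refine ⟨?_, ?_, ?_⟩
  · linear_combination -l₁ ^ 2 * h7
  · linear_combination (l₁ ^ 3 - l₁ * l₂) * h7
  · linear_combination (l₂ * l₁ ^ 2 - l₁ * l₃) * h7

lemma depressed_coeffs_of_thirteen_eq_zero (h13 : (13 : K) = 0) :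
    depressedCubicCoeff l₁ l₂ = -3 * l₁ ^ 2 + l₂ ∧
      depressedQuadraticCoeff l₁ l₂ l₃ = l₃ - 4 * l₁ ^ 3 + 2 * l₁ * l₂ ∧
      depressedLinearCoeff l₁ l₂ l₃ l₄ =
        -3 * l₁ * l₃ - 2 * l₁ ^ 4 - 3 * l₂ * l₁ ^ 2 + l₄ := by
  have h5 : (5 : K)⁻¹ = 8 := inv_eq_of_mul_eq_one_right (by linear_combination 3 * h13)
  have h25 : (25 : K)⁻¹ = -1 := inv_eq_of_mul_eq_one_right (by linear_combination -2 * h13)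
  have h125 : (125 : K)⁻¹ = 5 := inv_eq_of_mul_eq_one_right (by linear_combination 48 * h13)
  simp only [depressedCubicCoeff, depressedQuadraticCoeff, depressedLinearCoeff, div_eq_mul_inv,
    h5, h25, h125]
  refine ⟨?_, ?_, ?_⟩
  · linear_combination -l₁ ^ 2 * h13
  · linear_combination -2 * l₁ * l₂ * h13
  · linear_combination (-l₁ * l₃ - l₁ ^ 4) * h13

end

variable {K F : Type*} [Field K] [Field F] (σ : K →+* F) (l₁ l₂ l₃ l₄ : K)

lemma map_depressedCubicCoeff :
    σ (depressedCubicCoeff l₁ l₂) = depressedCubicCoeff (σ l₁) (σ l₂) := by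
  simp only [depressedCubicCoeff, map_add, map_neg, map_mul, map_div₀, map_pow, map_ofNat]

lemma map_depressedQuadraticCoeff : σ (depressedQuadraticCoeff l₁ l₂ l₃) =
    depressedQuadraticCoeff (σ l₁) (σ l₂) (σ l₃) := by
  simp only [depressedQuadraticCoeff, map_add, map_sub, map_mul, map_div₀, map_pow, map_ofNat]

lemma map_depressedLinearCoeff : σ (depressedLinearCoeff l₁ l₂ l₃ l₄) =
    depressedLinearCoeff (σ l₁) (σ l₂) (σ l₃) (σ l₄) := by
  simp only [depressedLinearCoeff, map_add, map_sub, map_neg, map_mul, map_div₀, map_pow,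
    map_ofNat]

end Depression

section QuarticExtensions

open Polynomial Module

variable {F : Type*} [Field F] {a l₁ l₂ l₃ l₄ : F}

lemma conjugatePolynomial_four (q : ℕ) (a : F) : conjugatePolynomial q 4 a = X ^ 4 +
    C (a + a ^ q + a ^ q ^ 2 + a ^ q ^ 3) * X ^ 3 +
    C (a * a ^ q + a * a ^ q ^ 2 + a * a ^ q ^ 3 + a ^ q * a ^ q ^ 2 + a ^ q * a ^ q ^ 3 +
      a ^ q ^ 2 * a ^ q ^ 3) * X ^ 2 +
    C (a * a ^ q * a ^ q ^ 2 + a * a ^ q * a ^ q ^ 3 + a * a ^ q ^ 2 * a ^ q ^ 3 +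
      a ^ q * a ^ q ^ 2 * a ^ q ^ 3) * X + C (a * a ^ q * a ^ q ^ 2 * a ^ q ^ 3) := by
  simp only [conjugatePolynomial, prod_range_succ, prod_range_zero, pow_zero, pow_one, map_add,
    map_mul]
  ring

-- If `l₁ = 0`, then `a ^ 4 = -1` makes `a` a repeated root of the separable `X ^ 4 + 1`; otherwise
-- the product `l₄` of the conjugates vanishes.
lemma depressed_coeffs_ne_zero_zero_one (h3 : (3 : F) = 0) (ha : a ≠ 0)
    (hP : conjugatePolynomial 3 4 a = X ^ 4 + C l₁ * X ^ 3 + C l₂ * X ^ 2 + C l₃ * X + C l₄)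
    (hl₁ : l₁ ^ 3 = l₁) :
    ¬(depressedCubicCoeff l₁ l₂ = 0 ∧ depressedQuadraticCoeff l₁ l₂ l₃ = 0 ∧
      depressedLinearCoeff l₁ l₂ l₃ l₄ = 1) := by
  have h2 : (2 : F) ≠ 0 := fun h => one_ne_zero (α := F) (by linear_combination h3 - h)
  have heval (x : F) : (x + a) * (x + a ^ 3) * (x + a ^ 9) * (x + a ^ 27) =
      x ^ 4 + l₁ * x ^ 3 + l₂ * x ^ 2 + l₃ * x + l₄ := by
    simpa [conjugatePolynomial, prod_range_succ, mul_assoc] using congrArg (Polynomial.eval x) hP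
  obtain ⟨hA, hB, hC⟩ := depressed_coeffs_of_three_eq_zero (l₁ := l₁) (l₂ := l₂) (l₃ := l₃)
    (l₄ := l₄) h3
  rw [hA, hB, hC]
  rintro ⟨h₂, h₃, h₄⟩
  obtain rfl | h0 := eq_or_ne l₁ 0
  · have ha4 : a ^ 4 = -1 := by linear_combination -heval (-a) - h₄ - a ^ 2 * h₂ + a * h₃
    have ha9 : a ^ 9 = a := by linear_combination (a ^ 4 - 1) * a * ha4
    have ha27 : a ^ 27 = a ^ 3 := by
      linear_combination a ^ 3 * (a ^ 20 - a ^ 16 + a ^ 12 - a ^ 8 + a ^ 4 - 1) * ha4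
    have heval_a := heval a
    rw [ha9, ha27] at heval_a
    have hprod : 2 * (a ^ 2 * (1 + a ^ 2)) = 0 := pow_eq_zero_iff two_ne_zero |>.mp (by
      linear_combination heval_a + ha4 + a ^ 2 * h₂ + a * h₃ + h₄)
    have hsq : 1 + a ^ 2 = 0 := by simpa [h2, ha] using hprod
    exact h2 (by linear_combination ha4 - (a ^ 2 - 1) * hsq)
  · have hsq : l₁ ^ 2 = 1 := mul_left_cancel₀ h0 (by linear_combination hl₁)
    have hprod : a ^ 40 = 0 := by
      linear_combination heval 0 + h₄ + l₁ * h₃ - (l₁ ^ 2 + 1) * hsq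
    exact ha (pow_eq_zero_iff (by norm_num) |>.mp hprod)

variable (K : Type*) [Field K] [Finite F] [Algebra K F]

lemma exists_norm_algebraMap_add_eq (hrank : finrank K F = 4)
    (hP : conjugatePolynomial (Nat.card K) 4 a =
      X ^ 4 + C l₁ * X ^ 3 + C l₂ * X ^ 2 + C l₃ * X + C l₄) :
    ∃ m₁ m₂ m₃ m₄ : K, algebraMap K F m₁ = l₁ ∧ algebraMap K F m₂ = l₂ ∧
      algebraMap K F m₃ = l₃ ∧ algebraMap K F m₄ = l₄ ∧ ∀ c : K,
        Algebra.norm K (algebraMap K F c + a) = c ^ 4 + m₁ * c ^ 3 + m₂ * c ^ 2 + m₃ * c + m₄ := by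
  have hlift := (lifts_iff_coeff_lifts _).mp (conjugatePolynomial_mem_lifts K a)
  rw [hrank, hP] at hlift
  obtain ⟨m₁, rfl⟩ : l₁ ∈ Set.range (algebraMap K F) := by simpa using hlift 3
  obtain ⟨m₂, rfl⟩ : l₂ ∈ Set.range (algebraMap K F) := by simpa using hlift 2
  obtain ⟨m₃, rfl⟩ : l₃ ∈ Set.range (algebraMap K F) := by simpa [coeff_X] using hlift 1
  obtain ⟨m₄, rfl⟩ : l₄ ∈ Set.range (algebraMap K F) := by simpa using hlift 0
  refine ⟨m₁, m₂, m₃, m₄, rfl, rfl, rfl, rfl, fun c => ?_⟩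
  rw [norm_algebraMap_add_eq_eval K (P := X ^ 4 + C m₁ * X ^ 3 + C m₂ * X ^ 2 + C m₃ * X + C m₄)]
  · simp
  · rw [hrank, hP]
    simp

theorem bijective_and_bijective_add_self_iff (h2 : (2 : F) ≠ 0) (h5 : (5 : F) ≠ 0)
    (hrank : finrank K F = 4) (hcop : Nat.Coprime 5 (Nat.card K - 1)) (ha : a ≠ 0)
    (hP : conjugatePolynomial (Nat.card K) 4 a =
      X ^ 4 + C l₁ * X ^ 3 + C l₂ * X ^ 2 + C l₃ * X + C l₄) :
    (Bijective (fun x : F => a⁻¹ * x ^ ((Nat.card F - 1) / (Nat.card K - 1) + 1)) ∧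
      Bijective (fun x : F => a⁻¹ * x ^ ((Nat.card F - 1) / (Nat.card K - 1) + 1) + x)) ↔
      IsDicksonQuintic (Nat.card K) (depressedCubicCoeff l₁ l₂) (depressedQuadraticCoeff l₁ l₂ l₃)
        (depressedLinearCoeff l₁ l₂ l₃ l₄) := by
  have : Finite K := Finite.of_injective _ (algebraMap K F).injective
  have : Fintype K := Fintype.ofFinite K
  have h2K : (2 : K) ≠ 0 := fun h => h2 (by rw [← map_ofNat (algebraMap K F), h, map_zero])
  have h5K : (5 : K) ≠ 0 := fun h => h5 (by rw [← map_ofNat (algebraMap K F), h, map_zero])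
  obtain ⟨m₁, m₂, m₃, m₄, rfl, rfl, rfl, rfl, hnorm⟩ := exists_norm_algebraMap_add_eq K hrank hP
  rw [bijective_inv_mul_pow_iff K ha, bijective_inv_mul_pow_add_self_iff K ha, hrank]
  simp only [hnorm]
  rw [Nat.card_eq_fintype_card] at hP hcop ⊢
  rw [and_iff_right (bijective_pow_of_coprime hcop (by norm_num)),
    ← bijective_quintic_depressed_iff _ _ _ _ h5K, bijective_quintic_iff h2K h5K hcop,
    ← map_depressedCubicCoeff, ← map_depressedQuadraticCoeff, ← map_depressedLinearCoeff,
    isDicksonQuintic_map_iff (algebraMap K F).injective, or_iff_left]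
  rintro ⟨hq, hA, hB, hC⟩
  have h3 : ((Fintype.card K : ℕ) : F) = 0 := by
    rw [← map_natCast (algebraMap K F), Nat.cast_card_eq_zero, map_zero]
  have hm₁ : algebraMap K F m₁ ^ 3 = algebraMap K F m₁ := by
    rw [← map_pow, ← hq, FiniteField.pow_card]
  rw [hq] at h3 hP
  refine depressed_coeffs_ne_zero_zero_one h3 ha hP hm₁ ⟨?_, ?_, ?_⟩
  · rw [← map_depressedCubicCoeff, hA, map_zero]
  · rw [← map_depressedQuadraticCoeff, hB, map_zero]
  · rw [← map_depressedLinearCoeff, hC, map_one]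

end QuarticExtensions

section Conditions

variable {F : Type*} [Field F] {l₁ l₂ l₃ l₄ : F}

lemma depressed_coeffs_eq_iff_of_three_eq_zero (h3 : (3 : F) = 0) (x y : F) :
    depressedCubicCoeff l₁ l₂ = x ∧ depressedQuadraticCoeff l₁ l₂ l₃ = 0 ∧
        depressedLinearCoeff l₁ l₂ l₃ l₄ = y ↔
      l₂ = l₁ ^ 2 + x ∧ l₃ = -l₁ ^ 3 ∧ l₄ = -l₁ ^ 4 + y := by
  obtain ⟨hA, hB, hC⟩ := depressed_coeffs_of_three_eq_zero (l₁ := l₁) (l₂ := l₂) (l₃ := l₃)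
    (l₄ := l₄) h3
  rw [hA, hB, hC, sub_eq_iff_eq_add', add_eq_zero_iff_eq_neg]
  refine and_congr_right' (and_congr_right ?_)
  rintro rfl
  constructor <;> intro h <;> linear_combination h

lemma five_mul_eq_sq_iff (h5 : (5 : F) ≠ 0) (x y : F) : 5 * y = x ^ 2 ↔ 5⁻¹ * x ^ 2 = y := by
  rw [inv_mul_eq_iff_eq_mul₀ h5, eq_comm]

lemma exists_and_eq_and_iff {α : Type*} {P Q : α → Prop} {x : α} :
    (∃ v, P v ∧ x = v ∧ Q v) ↔ P x ∧ Q x :=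
  ⟨fun ⟨_, hP, h, hQ⟩ => h ▸ ⟨hP, hQ⟩, fun ⟨hP, hQ⟩ => ⟨x, hP, rfl, hQ⟩⟩

variable {p k : ℕ} [CharP F p]

lemma card_eq_three_and_iff (x y : F) :
    p ^ k = 3 ∧ depressedCubicCoeff l₁ l₂ = x ∧ depressedQuadraticCoeff l₁ l₂ l₃ = 0 ∧
        depressedLinearCoeff l₁ l₂ l₃ l₄ = y ↔
      p = 3 ∧ k = 1 ∧ l₂ = l₁ ^ 2 + x ∧ l₃ = -l₁ ^ 3 ∧ l₄ = -l₁ ^ 4 + y := by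
  rw [Nat.prime_three.pow_eq_iff, and_assoc]
  refine and_congr_right fun hp => and_congr_right' ?_
  subst hp
  exact depressed_coeffs_eq_iff_of_three_eq_zero (CharP.cast_eq_zero F 3) x y

lemma card_eq_nine_and_iff (hp : p.Prime) :
    p ^ k = 9 ∧ depressedCubicCoeff l₁ l₂ = 0 ∧ depressedQuadraticCoeff l₁ l₂ l₃ = 0 ∧
        depressedLinearCoeff l₁ l₂ l₃ l₄ ^ 2 = -1 ↔
      p = 3 ∧ k = 2 ∧ l₂ = l₁ ^ 2 ∧ l₃ = -l₁ ^ 3 ∧ (l₄ + l₁ ^ 4) ^ 2 = -1 := by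
  have hcard : p ^ k = 9 ↔ p = 3 ∧ k = 2 :=
    ⟨fun h => hp.pow_inj' Nat.prime_three (by rintro rfl; simp at h) two_ne_zero h,
      by rintro ⟨rfl, rfl⟩; norm_num⟩
  rw [hcard, and_assoc]
  refine and_congr_right fun hp3 => and_congr_right' ?_
  obtain ⟨hA, hB, hC⟩ := depressed_coeffs_of_three_eq_zero (l₁ := l₁) (l₂ := l₂) (l₃ := l₃)
    (l₄ := l₄) (by subst hp3; exact CharP.cast_eq_zero F 3)
  rw [hA, hB, hC, sub_eq_zero, add_eq_zero_iff_eq_neg]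
  refine and_congr_right' (and_congr_right ?_)
  rintro rfl
  rw [mul_neg, sub_neg_eq_add, ← pow_succ']

lemma card_eq_seven_and_iff (P : F → F → F → Prop) :
    p ^ k = 7 ∧ P (depressedCubicCoeff l₁ l₂) (depressedQuadraticCoeff l₁ l₂ l₃)
        (depressedLinearCoeff l₁ l₂ l₃ l₄) ↔
      p = 7 ∧ k = 1 ∧ P (l₁ ^ 2 + l₂) (l₃ + l₁ ^ 3 - 2 * l₁ * l₂)
        (l₁ * l₃ + 3 * l₁ ^ 4 - l₂ * l₁ ^ 2 + l₄) := by
  have h7 : Nat.Prime 7 := by norm_num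
  rw [h7.pow_eq_iff, and_assoc]
  refine and_congr_right fun hp => and_congr_right' ?_
  obtain ⟨hA, hB, hC⟩ := depressed_coeffs_of_seven_eq_zero (l₁ := l₁) (l₂ := l₂) (l₃ := l₃)
    (l₄ := l₄) (by subst hp; exact CharP.cast_eq_zero F 7)
  rw [hA, hB, hC]

lemma card_eq_thirteen_and_iff (P : F → F → F → Prop) :
    p ^ k = 13 ∧ P (depressedCubicCoeff l₁ l₂) (depressedQuadraticCoeff l₁ l₂ l₃)
        (depressedLinearCoeff l₁ l₂ l₃ l₄) ↔
      p = 13 ∧ k = 1 ∧ P (-3 * l₁ ^ 2 + l₂) (l₃ - 4 * l₁ ^ 3 + 2 * l₁ * l₂)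
        (-3 * l₁ * l₃ - 2 * l₁ ^ 4 - 3 * l₂ * l₁ ^ 2 + l₄) := by
  have h13 : Nat.Prime 13 := by norm_num
  rw [h13.pow_eq_iff, and_assoc]
  refine and_congr_right fun hp => and_congr_right' ?_
  obtain ⟨hA, hB, hC⟩ := depressed_coeffs_of_thirteen_eq_zero (l₁ := l₁) (l₂ := l₂) (l₃ := l₃)
    (l₄ := l₄) (by subst hp; exact CharP.cast_eq_zero F 13)
  rw [hA, hB, hC]

end Conditions

open Module in
lemma exists_algebra_galoisField_finrank_eq {F : Type*} [Field F] [Finite F] {p k r : ℕ}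
    [Fact p.Prime] [CharP F p] (hk : k ≠ 0) (hF : Nat.card F = p ^ (r * k)) :
    ∃ _ : Algebra (GaloisField p k) F, finrank (GaloisField p k) F = r := by
  let _ : Algebra (ZMod p) F := ZMod.algebra F p
  have hp := (Fact.out : p.Prime).two_le
  have hdegree : finrank (ZMod p) F = r * k := by
    rw [natCard_eq_pow_finrank (K := ZMod p), Nat.card_zmod] at hF
    exact Nat.pow_right_injective hp hF
  obtain ⟨σ⟩ := FiniteField.nonempty_algHom_of_finrank_dvd (F := ZMod p) (K := GaloisField p k)
    (L := F) (by rw [GaloisField.finrank p hk, hdegree]; exact dvd_mul_left k r)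
  let _ : Algebra (GaloisField p k) F := σ.toRingHom.toAlgebra
  refine ⟨inferInstance, ?_⟩
  rw [natCard_eq_pow_finrank (K := GaloisField p k), GaloisField.card p k hk, ← pow_mul] at hF
  exact Nat.eq_of_mul_eq_mul_right (Nat.pos_of_ne_zero hk)
    ((mul_comm _ _).trans (Nat.pow_right_injective hp hF))

/-- **Theorem (r = 4, p ≠ 5).** Let `p` be an odd prime with `p ≠ 5`, `k ≥ 1` with
`gcd(5, p^k - 1) = 1`, `n = 4k`, `d = (p^{4k} - 1)/(p^k - 1) + 1`, and let `F` be the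
finite field with `p^n` elements. For `a ∈ F`, `a ≠ 0`, let `λ₁, λ₂, λ₃, λ₄` be the
elementary symmetric functions of `a, a^{p^k}, a^{p^{2k}}, a^{p^{3k}}`. Then `a⁻¹ x^d`
is a complete permutation polynomial over `F` iff one of the eight listed conditions
holds (all arithmetic in `F`; fractions denote division by `5, 25, 125`, invertible
since `p ≠ 5`). -/
theorem stmt_4 (p : ℕ) (hp : p.Prime) (hodd : Odd p) (hp5 : p ≠ 5)
    (k : ℕ) (hk : 0 < k) (hgcd : Nat.gcd 5 (p ^ k - 1) = 1)
    (n : ℕ) (hn : n = 4 * k) (d : ℕ) (hd : d = (p ^ (4 * k) - 1) / (p ^ k - 1) + 1)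
    (F : Type*) [Field F] [Fintype F] (hF : Fintype.card F = p ^ n)
    (a : F) (ha : a ≠ 0)
    (a0 a1 a2 a3 : F) (ha0 : a0 = a) (ha1 : a1 = a ^ (p ^ k))
    (ha2 : a2 = a ^ (p ^ (2 * k))) (ha3 : a3 = a ^ (p ^ (3 * k)))
    (l1 l2 l3 l4 : F)
    (hl1 : l1 = a0 + a1 + a2 + a3)
    (hl2 : l2 = a0 * a1 + a0 * a2 + a0 * a3 + a1 * a2 + a1 * a3 + a2 * a3)
    (hl3 : l3 = a0 * a1 * a2 + a0 * a1 * a3 + a0 * a2 * a3 + a1 * a2 * a3)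
    (hl4 : l4 = a0 * a1 * a2 * a3) :
    (Function.Bijective (fun x : F => a⁻¹ * x ^ d) ∧
     Function.Bijective (fun x : F => a⁻¹ * x ^ d + x)) ↔
    ((-(2 / 5 : F) * l1 ^ 2 + l2 = 0 ∧
        -(2 / 5 : F) * l1 * l3 - (3 / 125 : F) * l1 ^ 4 + (3 / 25 : F) * l2 * l1 ^ 2 + l4 = 0 ∧
        l3 + (4 / 25 : F) * l1 ^ 3 - (3 / 5 : F) * l1 * l2 = 0) ∨
     ((p ^ k % 5 = 2 ∨ p ^ k % 5 = 3) ∧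
        (5 : F)⁻¹ * (-(2 / 5 : F) * l1 ^ 2 + l2) ^ 2 =
          -(2 / 5 : F) * l1 * l3 - (3 / 125 : F) * l1 ^ 4 + (3 / 25 : F) * l2 * l1 ^ 2 + l4 ∧
        l3 + (4 / 25 : F) * l1 ^ 3 - (3 / 5 : F) * l1 * l2 = 0) ∨
     (p = 3 ∧ k = 2 ∧ l2 = l1 ^ 2 ∧ l3 = -l1 ^ 3 ∧ (l4 + l1 ^ 4) ^ 2 = -1) ∨
     (p = 3 ∧ k = 1 ∧ l2 = l1 ^ 2 + 1 ∧ l3 = -l1 ^ 3 ∧ l4 = -l1 ^ 4) ∨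
     (p = 3 ∧ k = 1 ∧ l2 = l1 ^ 2 + 2 ∧ l3 = -l1 ^ 3 ∧ l4 = -l1 ^ 4 + 1) ∨
     (p = 7 ∧ k = 1 ∧ l1 ^ 2 + l2 = 0 ∧
        l1 * l3 + 3 * l1 ^ 4 - l2 * l1 ^ 2 + l4 = 0 ∧
        (l3 + l1 ^ 3 - 2 * l1 * l2 = 2 ∨ l3 + l1 ^ 3 - 2 * l1 * l2 = -2)) ∨
     (p = 7 ∧ k = 1 ∧ ∃ v : F, (v = 3 ∨ v = 5 ∨ v = 6) ∧
        l1 ^ 2 + l2 = v ∧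
        l1 * l3 + 3 * l1 ^ 4 - l2 * l1 ^ 2 + l4 = 3 * v ^ 2 ∧
        (l3 + l1 ^ 3 - 2 * l1 * l2 = 1 ∨ l3 + l1 ^ 3 - 2 * l1 * l2 = -1)) ∨
     (p = 13 ∧ k = 1 ∧ ∃ v : F,
        (v = 2 ∨ v = -2 ∨ v = 5 ∨ v = -5 ∨ v = 6 ∨ v = -6) ∧
        -3 * l1 ^ 2 + l2 = v ∧
        -3 * l1 * l3 - 2 * l1 ^ 4 - 3 * l2 * l1 ^ 2 + l4 = 3 * v ^ 2 ∧
        l3 - 4 * l1 ^ 3 + 2 * l1 * l2 = 0)) := by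
  subst hn hd ha0
  have : Fact p.Prime := ⟨hp⟩
  have : CharP F p := charP_of_card_eq_prime_pow hF
  rw [← Nat.card_eq_fintype_card] at hF
  obtain ⟨_, hrank⟩ := exists_algebra_galoisField_finrank_eq hk.ne' hF
  have hK : Nat.card (GaloisField p k) = p ^ k := GaloisField.card p k hk.ne'
  have hp2 : p ≠ 2 := hodd.ne_two_of_dvd_nat dvd_rfl
  have h2 : (2 : F) ≠ 0 := mod_cast CharP.cast_ne_zero_of_ne_of_prime F Nat.prime_two hp2
  have h5 : (5 : F) ≠ 0 := mod_cast CharP.cast_ne_zero_of_ne_of_prime F Nat.prime_five hp5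
  have hP := conjugatePolynomial_four (p ^ k) a0
  rw [← pow_mul, ← pow_mul, mul_comm k, mul_comm k, ← ha1, ← ha2, ← ha3, ← hl1, ← hl2, ← hl3,
    ← hl4, ← hK] at hP
  have hmain := bijective_and_bijective_add_self_iff _ h2 h5 hrank (by rwa [hK]) ha hP
  rw [hF, hK] at hmain
  simp only [exists_and_eq_and_iff]
  refine hmain.trans (or_congr Iff.rfl (or_congr ?_ (or_congr ?_ (or_congr ?_ (or_congr ?_
    (or_congr ?_ (or_congr ?_ ?_)))))))
  · exact and_congr_right' (and_congr_left' (five_mul_eq_sq_iff h5 _ _))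
  · exact card_eq_nine_and_iff hp
  · simpa using card_eq_three_and_iff (l₁ := l1) (1 : F) 0
  · exact card_eq_three_and_iff (2 : F) 1
  · exact card_eq_seven_and_iff fun A B C => A = 0 ∧ C = 0 ∧ (B = 2 ∨ B = -2)
  · exact card_eq_seven_and_iff fun A B C =>
      (A = 3 ∨ A = 5 ∨ A = 6) ∧ C = 3 * A ^ 2 ∧ (B = 1 ∨ B = -1)
  · exact card_eq_thirteen_and_iff fun A B C =>
      (A = 2 ∨ A = -2 ∨ A = 5 ∨ A = -5 ∨ A = 6 ∨ A = -6) ∧ C = 3 * A ^ 2 ∧ B = 0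
end

section
/- Let k be a positive integer with gcd(k, 4) = 1, n = 4k, and d = (3^{4k} - 1)/(3^k - 1) + 1. Let β ∈ F_{3^n} satisfy β⁴ - β - 1 = 0, and let u, v ∈ F_{3^k}, not both zero. Then a^{-1}x^d is a complete permutation polynomial over F_{3^n} for each of the following choices of a: (1) a = u(1 - β² - β³) + v(β + β³); (2) a = u(1 - β²) + v(β - β² - β³); (3) a = u(1 + β) + v(β² - β³); (4) a = u(1 + β³) + v(β + β²). -/
/-!
Write `K = F_q` with `q = 3 ^ k`, let `L/K` have degree `4`, and let `N` be its norm, so that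
`x ^ d = x * N x`. The norm of `x * (N x + a)` is the value at `t = N x` of `t * N (t + a)`; hence
if this function of `t` is injective on `K`, then `N x`, and with it `x`, can be recovered from
`x * (N x + a)`. The cases `a = 0` and `a` itself give the two halves of complete permutation.

For the listed `a`, the function `t * N (t + a)` is `D₅(t - c, α) - D₅(-c, α)`, where `D₅` is the
quintic Dickson polynomial and `c, α ∈ K`. In characteristic `3`, `D₅(x, α) - D₅(y, α)` is `x - y`
times a sum of two squares, and `-1` is not a square in `K` because `k` is odd.
-/

open Function Polynomial

section NormCriterion

variable {K L : Type*} [Field K] [Field L] [Algebra K L]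

theorem injective_mul_norm_add [FiniteDimensional K L] {a : L}
    (h : Injective fun t : K => t * Algebra.norm K (algebraMap K L t + a)) :
    Injective fun x : L => x * (algebraMap K L (Algebra.norm K x) + a) := by
  intro x y (hxy : x * _ = y * _)
  have hnorm : Algebra.norm K x = Algebra.norm K y :=
    h <| by simpa only [map_mul] using congrArg (Algebra.norm K) hxy
  rw [hnorm] at hxy
  rcases mul_eq_mul_right_iff.mp hxy with heq | hroot
  · exact heq
  -- `t = N y` is now a zero of `t * N (t + a)`, as is `t = 0`.
  have hy : Algebra.norm K y = 0 :=
    h <| by simp only [hroot, map_zero, Algebra.norm_zero, mul_zero, zero_mul]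
  rw [Algebra.norm_eq_zero_iff.mp hy, Algebra.norm_eq_zero_iff.mp (hnorm.trans hy)]

/-- A self-map `f` of `L` is a complete permutation if both `f` and `x ↦ f x + x` are bijective.
It is stated for functions; a complete permutation polynomial is one whose evaluation map has
this property. -/
def IsCompletePermutation (f : L → L) : Prop :=
  Bijective f ∧ Bijective fun x => f x + x

theorem isCompletePermutation_inv_mul_pow [Finite L] {a : L} (ha : a ≠ 0)
    (h₀ : Injective fun t : K => t ^ (Module.finrank K L + 1))
    (h : Injective fun t : K => t * Algebra.norm K (algebraMap K L t + a)) :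
    IsCompletePermutation fun x : L =>
      a⁻¹ * x ^ ((Nat.card L - 1) / (Nat.card K - 1) + 1) := by
  have hpow (x : L) : x ^ ((Nat.card L - 1) / (Nat.card K - 1) + 1) =
      x * algebraMap K L (Algebra.norm K x) := by
    rw [pow_succ', FiniteField.algebraMap_norm_eq_pow]
  have hinj₀ : Injective fun x : L => x * (algebraMap K L (Algebra.norm K x) + 0) :=
    injective_mul_norm_add <| by
      simpa only [add_zero, Algebra.norm_algebraMap, ← pow_succ'] using h₀
  have hmul : Injective (a⁻¹ * · : L → L) := mul_right_injective₀ (inv_ne_zero ha)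
  refine ⟨Finite.injective_iff_bijective.mp ?_, Finite.injective_iff_bijective.mp ?_⟩
  · convert hmul.comp hinj₀ using 2 with x
    simp only [comp_apply, hpow, add_zero]
  · convert hmul.comp (injective_mul_norm_add h) using 2 with x
    simp only [comp_apply, hpow]
    field_simp

end NormCriterion

section Dickson

variable {R K : Type*} [CommRing R] [Field K]

theorem sq_add_sq_eq_zero_iff_of_not_isSquare_neg_one (hK : ¬IsSquare (-1 : K)) {x y : K} :
    x ^ 2 + y ^ 2 = 0 ↔ x = 0 ∧ y = 0 := by
  refine ⟨fun h => ?_, by rintro ⟨rfl, rfl⟩; ring⟩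
  have hy : y = 0 := by
    by_contra hy
    refine hK ⟨x / y, ?_⟩
    field_simp
    linear_combination -h
  subst hy
  simpa using h

theorem dickson_one_five (α : R) :
    dickson 1 α 5 = X ^ 5 - 5 * C α * X ^ 3 + 5 * C α ^ 2 * X := by
  simp only [dickson_add_two, dickson_one, dickson_zero, zero_add, Nat.cast_one]
  ring

theorem eval_dickson_one_five [CharP R 3] (α x : R) :
    (dickson 1 α 5).eval x = x ^ 5 + α * x ^ 3 - α ^ 2 * x := by
  have h3 : (3 : R) = 0 := CharP.ofNat_eq_zero R 3
  simp only [dickson_one_five, eval_add, eval_sub, eval_mul, eval_pow, eval_X, eval_C, eval_ofNat]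
  linear_combination (2 * α ^ 2 * x - 2 * α * x ^ 3) * h3

theorem eval_dickson_one_five_sub_eval [CharP R 3] (α x y : R) :
    (dickson 1 α 5).eval x - (dickson 1 α 5).eval y =
      (x - y) * ((x ^ 2 + y ^ 2 - (x * y + α)) ^ 2 + (x * y + α) ^ 2) := by
  simp only [eval_dickson_one_five]
  grind

theorem injective_eval_dickson_one_five [CharP K 3] (hK : ¬IsSquare (-1 : K)) (α : K) :
    Injective fun x => (dickson 1 α 5).eval x := by
  intro x y hxy
  have hfactor := (eval_dickson_one_five_sub_eval α x y).symm.trans (sub_eq_zero.mpr hxy)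
  refine (mul_eq_zero.mp hfactor).elim sub_eq_zero.mp fun hsum => ?_
  obtain ⟨hdiff, hxyα⟩ := (sq_add_sq_eq_zero_iff_of_not_isSquare_neg_one hK).mp hsum
  rw [hxyα, sub_zero] at hdiff
  obtain ⟨rfl, rfl⟩ := (sq_add_sq_eq_zero_iff_of_not_isSquare_neg_one hK).mp hdiff
  rfl

/-- The value at `t` of the quotient of `D₅(t - c, α) - D₅(-c, α)` by `t`, expanded in
characteristic `3`; the norms `N (t + a)` are of this form. -/
def dicksonQuotient (c α t : R) : R :=
  t ^ 4 + c * t ^ 3 + (c ^ 2 + α) * t ^ 2 - c ^ 3 * t - (c ^ 4 + α ^ 2)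

theorem mul_dicksonQuotient [CharP R 3] (c α t : R) :
    t * dicksonQuotient c α t =
      (dickson 1 α 5).eval (t - c) - (dickson 1 α 5).eval (-c) := by
  simp only [dicksonQuotient, eval_dickson_one_five]
  grind

theorem injective_mul_dicksonQuotient [CharP K 3] (hK : ¬IsSquare (-1 : K)) (c α : K) :
    Injective fun t => t * dicksonQuotient c α t := by
  simp only [mul_dicksonQuotient]
  exact (sub_left_injective.comp (injective_eval_dickson_one_five hK α)).comp sub_left_injective

theorem dicksonQuotient_zero_ne_zero (hK : ¬IsSquare (-1 : K)) {c α : K}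
    (hcα : ¬(c = 0 ∧ α = 0)) : dicksonQuotient c α 0 ≠ 0 := by
  intro h
  have hsum : (c ^ 2) ^ 2 + α ^ 2 = 0 := by
    simp only [dicksonQuotient] at h
    linear_combination -h
  obtain ⟨hc, hα⟩ := (sq_add_sq_eq_zero_iff_of_not_isSquare_neg_one hK).mp hsum
  exact hcα ⟨pow_eq_zero_iff two_ne_zero |>.mp hc, hα⟩

theorem isCompletePermutation_of_norm_add_eq_dicksonQuotient {L : Type*} [Field L] [Algebra K L]
    [Finite L] [CharP K 3] (hK : ¬IsSquare (-1 : K)) (hL : Module.finrank K L = 4)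
    {a : L} {c α : K} (hcα : ¬(c = 0 ∧ α = 0))
    (hnorm : ∀ t : K, Algebra.norm K (algebraMap K L t + a) = dicksonQuotient c α t) :
    IsCompletePermutation fun x : L =>
      a⁻¹ * x ^ ((Nat.card L - 1) / (Nat.card K - 1) + 1) := by
  refine isCompletePermutation_inv_mul_pow (K := K) ?_ ?_ ?_
  · rintro rfl
    refine dicksonQuotient_zero_ne_zero hK hcα ?_
    rw [← hnorm, map_zero, add_zero, Algebra.norm_zero]
  · have hpow (t : K) : t ^ 5 = t * dicksonQuotient 0 0 t := by
      simp only [dicksonQuotient]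
      ring
    simpa only [hL, hpow] using injective_mul_dicksonQuotient hK 0 0
  · simpa only [hnorm] using injective_mul_dicksonQuotient hK c α

end Dickson

section FiniteFieldExtension

variable {K L : Type*} [Field K] [Field L] [Algebra K L]

theorem not_isSquare_neg_one_of_natCard_eq_three_pow [Finite K] {k : ℕ}
    (hK : Nat.card K = 3 ^ k) (hk : Odd k) : ¬IsSquare (-1 : K) := by
  have := Fintype.ofFinite K
  obtain ⟨m, rfl⟩ := hk
  rw [FiniteField.isSquare_neg_one_iff, ← Nat.card_eq_fintype_card, hK, not_not, pow_succ, pow_mul,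
    Nat.mul_mod, Nat.pow_mod]
  simp

theorem mem_range_algebraMap_of_pow_natCard_eq [Finite K] {x : L} (hx : x ^ Nat.card K = x) :
    x ∈ (algebraMap K L).range :=
  (splits_X_pow_nat_card_sub_X (K := K)).mem_range_of_isRoot
    (FiniteField.X_pow_card_sub_X_ne_zero K Finite.one_lt_card) <| by simp [hx]

theorem finrank_eq_of_natCard_eq_natCard_pow [Finite L] {n : ℕ}
    (h : Nat.card L = Nat.card K ^ n) : Module.finrank K L = n := by
  have := Finite.of_injective _ (algebraMap K L).injective
  exact Nat.pow_right_injective Finite.one_lt_card (Module.natCard_eq_pow_finrank.symm.trans h)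

theorem nonempty_galoisField_ringHom [Finite L] {p k m : ℕ} [Fact p.Prime]
    (hL : Nat.card L = p ^ m) (hk : k ≠ 0) (hkm : k ∣ m) :
    Nonempty (GaloisField p k →+* L) := by
  have := Fintype.ofFinite L
  have : CharP L p := charP_of_card_eq_prime_pow (Nat.card_eq_fintype_card.symm.trans hL)
  let _ : Algebra (ZMod p) L := ZMod.algebra L p
  have hdvd : Module.finrank (ZMod p) (GaloisField p k) ∣ Module.finrank (ZMod p) L := by
    rwa [GaloisField.finrank p hk, finrank_eq_of_natCard_eq_natCard_pow (by rwa [Nat.card_zmod])]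
  exact (FiniteField.nonempty_algHom_of_finrank_dvd hdvd).map (·.toRingHom)

theorem aeval_pow_natCard_pow [Finite K] (β : L) (f : K[X]) (i : ℕ) :
    aeval β f ^ Nat.card K ^ i = aeval (β ^ Nat.card K ^ i) f := by
  have := Fintype.ofFinite K
  have hfrob (x : L) : (FiniteField.frobeniusAlgHom K L ^ i) x = x ^ Nat.card K ^ i := by
    rw [AlgHom.coe_pow, FiniteField.coe_frobeniusAlgHom, pow_iterate, Nat.card_eq_fintype_card]
  rw [← hfrob, ← hfrob, aeval_algHom_apply]

theorem pow_pow_mod_of_pow_pow_eq_self {M : Type*} [Monoid M] {x : M} {p n : ℕ}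
    (hx : x ^ p ^ n = x) (m : ℕ) : x ^ p ^ (m % n) = x ^ p ^ m := by
  have hper : IsPeriodicPt (· ^ p : M → M) n x := by
    simpa only [IsPeriodicPt, IsFixedPt, pow_iterate] using hx
  simpa only [pow_iterate] using hper.iterate_mod_apply m

theorem prod_range_mul_mod {M : Type*} [CommMonoid M] {k n : ℕ} (hkn : k.Coprime n) (hn : 0 < n)
    (g : ℕ → M) : ∏ i ∈ Finset.range n, g (k * i % n) = ∏ i ∈ Finset.range n, g i := by
  have hmaps : Set.MapsTo (k * · % n) (Finset.range n : Set ℕ) (Finset.range n) := fun i _ => by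
    simpa using Nat.mod_lt _ hn
  have hinj : Set.InjOn (k * · % n) (Finset.range n : Set ℕ) := fun i hi j hj hij =>
    Nat.ModEq.eq_of_lt_of_lt (Nat.ModEq.cancel_left_of_coprime hkn.symm hij)
      (Finset.mem_range.mp hi) (Finset.mem_range.mp hj)
  exact Finset.prod_nbij (k * · % n) hmaps hinj
    (Finset.surjOn_of_injOn_of_card_le _ hmaps hinj le_rfl) fun _ _ => rfl

-- As `k` is prime to the degree, the `p ^ k`-power map permutes the conjugates `β ^ p ^ i` of `β`
-- over the prime field, so they are also its conjugates over `K`.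
theorem algebraMap_norm_aeval_eq_prod [Finite L] {p k : ℕ} (hK : Nat.card K = p ^ k)
    (hk : k.Coprime (Module.finrank K L)) {β : L} (hβ : β ^ p ^ Module.finrank K L = β)
    (f : K[X]) :
    algebraMap K L (Algebra.norm K (aeval β f)) =
      ∏ i ∈ Finset.range (Module.finrank K L), aeval (β ^ p ^ i) f := by
  have := Finite.of_injective _ (algebraMap K L).injective
  rw [FiniteField.algebraMap_norm_eq_prod_pow,
    ← prod_range_mul_mod hk Module.finrank_pos fun i => aeval (β ^ p ^ i) f]
  refine Finset.prod_congr rfl fun i _ => ?_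
  rw [aeval_pow_natCard_pow, pow_pow_mod_of_pow_pow_eq_self hβ, hK, ← pow_mul]

end FiniteFieldExtension

section QuarticRoot

variable {R : Type*} [CommRing R] [CharP R 3] {β : R}

theorem pow_nine_of_quartic_root (hβ : β ^ 4 - β - 1 = 0) : β ^ 9 = β ^ 3 - β ^ 2 + β := by
  have h3 : (3 : R) = 0 := CharP.ofNat_eq_zero R 3
  have hβ4 : β ^ 4 = β + 1 := by linear_combination hβ
  calc β ^ 9 = (β ^ 4) ^ 2 * β := by ring
    _ = (β + 1) ^ 2 * β := by rw [hβ4]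
    _ = β ^ 3 - β ^ 2 + β := by linear_combination β ^ 2 * h3

theorem pow_twenty_seven_of_quartic_root (hβ : β ^ 4 - β - 1 = 0) :
    β ^ 27 = β ^ 3 + β ^ 2 + β := by
  calc β ^ 27 = (β ^ 9) ^ 3 := by ring
    _ = (β ^ 3 - β ^ 2 + β) ^ 3 := by rw [pow_nine_of_quartic_root hβ]
    _ = β ^ 3 + β ^ 2 + β := by grind

theorem pow_eighty_one_of_quartic_root (hβ : β ^ 4 - β - 1 = 0) : β ^ 81 = β := by
  calc β ^ 81 = (β ^ 27) ^ 3 := by ring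
    _ = (β ^ 3 + β ^ 2 + β) ^ 3 := by rw [pow_twenty_seven_of_quartic_root hβ]
    _ = β := by grind

variable {K L : Type*} [Field K] [Field L] [Algebra K L] [Finite L] [CharP L 3] {k : ℕ} {β : L}

theorem norm_aeval_quartic_root_eq (hK : Nat.card K = 3 ^ k) (hk : k.Coprime 4)
    (hL : Module.finrank K L = 4) (hβ : β ^ 4 - β - 1 = 0) {f : K[X]} {s : K}
    (hs : aeval β f * aeval (β ^ 3) f * aeval (β ^ 3 - β ^ 2 + β) f *
      aeval (β ^ 3 + β ^ 2 + β) f = algebraMap K L s) :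
    Algebra.norm K (aeval β f) = s := by
  have hβ81 : β ^ 3 ^ Module.finrank K L = β := by
    simpa [hL] using pow_eighty_one_of_quartic_root hβ
  apply (algebraMap K L).injective
  rw [algebraMap_norm_aeval_eq_prod hK (hL.symm ▸ hk) hβ81, hL, ← hs]
  simp [Finset.prod_range_succ, pow_nine_of_quartic_root hβ, pow_twenty_seven_of_quartic_root hβ]

theorem norm_add_first_family (hK : Nat.card K = 3 ^ k) (hk : k.Coprime 4)
    (hL : Module.finrank K L = 4) (hβ : β ^ 4 - β - 1 = 0) (u v t : K) :
    Algebra.norm K (algebraMap K L t + (u • (1 - β ^ 2 - β ^ 3) + v • (β + β ^ 3))) =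
      dicksonQuotient u (u * v - v ^ 2) t := by
  convert norm_aeval_quartic_root_eq hK hk hL hβ
    (f := C t + (C u * (1 - X ^ 2 - X ^ 3) + C v * (X + X ^ 3))) ?_ using 2
  · simp [Algebra.smul_def]
  · simp only [dicksonQuotient, map_add, map_sub, map_mul, map_pow, map_one, aeval_C, aeval_X]
    grind

theorem norm_add_second_family (hK : Nat.card K = 3 ^ k) (hk : k.Coprime 4)
    (hL : Module.finrank K L = 4) (hβ : β ^ 4 - β - 1 = 0) (u v t : K) :
    Algebra.norm K (algebraMap K L t + (u • (1 - β ^ 2) + v • (β - β ^ 2 - β ^ 3))) =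
      dicksonQuotient u (-(u * v) - v ^ 2) t := by
  convert norm_aeval_quartic_root_eq hK hk hL hβ
    (f := C t + (C u * (1 - X ^ 2) + C v * (X - X ^ 2 - X ^ 3))) ?_ using 2
  · simp [Algebra.smul_def]
  · simp only [dicksonQuotient, map_add, map_sub, map_neg, map_mul, map_pow, map_one, aeval_C,
      aeval_X]
    grind

theorem norm_add_third_family (hK : Nat.card K = 3 ^ k) (hk : k.Coprime 4)
    (hL : Module.finrank K L = 4) (hβ : β ^ 4 - β - 1 = 0) (u v t : K) :
    Algebra.norm K (algebraMap K L t + (u • (1 + β) + v • (β ^ 2 - β ^ 3))) =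
      dicksonQuotient u (u * v + v ^ 2 - u ^ 2) t := by
  convert norm_aeval_quartic_root_eq hK hk hL hβ
    (f := C t + (C u * (1 + X) + C v * (X ^ 2 - X ^ 3))) ?_ using 2
  · simp [Algebra.smul_def]
  · simp only [dicksonQuotient, map_add, map_sub, map_mul, map_pow, map_one, aeval_C, aeval_X]
    grind

theorem norm_add_fourth_family (hK : Nat.card K = 3 ^ k) (hk : k.Coprime 4)
    (hL : Module.finrank K L = 4) (hβ : β ^ 4 - β - 1 = 0) (u v t : K) :
    Algebra.norm K (algebraMap K L t + (u • (1 + β ^ 3) + v • (β + β ^ 2))) =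
      dicksonQuotient u (v ^ 2 - u * v - u ^ 2) t := by
  convert norm_aeval_quartic_root_eq hK hk hL hβ
    (f := C t + (C u * (1 + X ^ 3) + C v * (X + X ^ 2))) ?_ using 2
  · simp [Algebra.smul_def]
  · simp only [dicksonQuotient, map_add, map_sub, map_mul, map_pow, map_one, aeval_C, aeval_X]
    grind

theorem exists_norm_add_eq_dicksonQuotient (hK : Nat.card K = 3 ^ k) (hk : k.Coprime 4)
    (hL : Module.finrank K L = 4) (hβ : β ^ 4 - β - 1 = 0)
    {u v : K} (huv : ¬(u = 0 ∧ v = 0)) {a : L}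
    (ha : a = u • (1 - β ^ 2 - β ^ 3) + v • (β + β ^ 3) ∨
      a = u • (1 - β ^ 2) + v • (β - β ^ 2 - β ^ 3) ∨
      a = u • (1 + β) + v • (β ^ 2 - β ^ 3) ∨
      a = u • (1 + β ^ 3) + v • (β + β ^ 2)) :
    ∃ α : K, ¬(u = 0 ∧ α = 0) ∧
      ∀ t : K, Algebra.norm K (algebraMap K L t + a) = dicksonQuotient u α t := by
  rcases ha with rfl | rfl | rfl | rfl
  · exact ⟨u * v - v ^ 2, fun ⟨hu, hα⟩ => huv ⟨hu, by simpa [hu] using hα⟩,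
      norm_add_first_family hK hk hL hβ u v⟩
  · exact ⟨-(u * v) - v ^ 2, fun ⟨hu, hα⟩ => huv ⟨hu, by simpa [hu] using hα⟩,
      norm_add_second_family hK hk hL hβ u v⟩
  · exact ⟨u * v + v ^ 2 - u ^ 2, fun ⟨hu, hα⟩ => huv ⟨hu, by simpa [hu] using hα⟩,
      norm_add_third_family hK hk hL hβ u v⟩
  · exact ⟨v ^ 2 - u * v - u ^ 2, fun ⟨hu, hα⟩ => huv ⟨hu, by simpa [hu] using hα⟩,
      norm_add_fourth_family hK hk hL hβ u v⟩

end QuarticRoot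

/-- **Corollary.** Let `k ≥ 1` with `gcd(k, 4) = 1`, `n = 4k`,
`d = (3^{4k} - 1)/(3^k - 1) + 1`, and let `F` be the finite field with `3^n` elements.
Let `β ∈ F` satisfy `β⁴ - β - 1 = 0`, and let `u, v` lie in the subfield `F_{3^k}`
(i.e. be fixed by the `k`-fold Frobenius `x ↦ x^{3^k}`), not both zero. Then `a⁻¹ x^d`
is a complete permutation polynomial over `F` for each of the four listed values of `a`. -/
theorem stmt_6 (k : ℕ) (hk : 0 < k) (hk4 : Nat.gcd k 4 = 1)
    (n : ℕ) (hn : n = 4 * k) (d : ℕ) (hd : d = (3 ^ (4 * k) - 1) / (3 ^ k - 1) + 1)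
    (F : Type*) [Field F] [Fintype F] (hF : Fintype.card F = 3 ^ n)
    (β : F) (hβ : β ^ 4 - β - 1 = 0)
    (u v : F) (hu : u ^ (3 ^ k) = u) (hv : v ^ (3 ^ k) = v)
    (huv : ¬(u = 0 ∧ v = 0)) :
    ∀ a : F,
      (a = u * (1 - β ^ 2 - β ^ 3) + v * (β + β ^ 3) ∨
       a = u * (1 - β ^ 2) + v * (β - β ^ 2 - β ^ 3) ∨
       a = u * (1 + β) + v * (β ^ 2 - β ^ 3) ∨
       a = u * (1 + β ^ 3) + v * (β + β ^ 2)) →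
      Function.Bijective (fun x : F => a⁻¹ * x ^ d) ∧
      Function.Bijective (fun x : F => a⁻¹ * x ^ d + x) := by
  subst hn hd
  have : Fact (Nat.Prime 3) := ⟨Nat.prime_three⟩
  have : CharP F 3 := charP_of_card_eq_prime_pow hF
  rw [Fintype.card_eq_nat_card] at hF
  obtain ⟨ι⟩ := nonempty_galoisField_ringHom hF hk.ne' (dvd_mul_left k 4)
  algebraize [ι]
  have hK : Nat.card (GaloisField 3 k) = 3 ^ k := GaloisField.card 3 k hk.ne'
  have hL : Module.finrank (GaloisField 3 k) F = 4 :=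
    finrank_eq_of_natCard_eq_natCard_pow (by rw [hF, hK, mul_comm, pow_mul])
  have hsq : ¬IsSquare (-1 : GaloisField 3 k) :=
    not_isSquare_neg_one_of_natCard_eq_three_pow hK <|
      Nat.coprime_two_right.mp (Nat.Coprime.coprime_dvd_right (by norm_num) hk4)
  obtain ⟨u, rfl⟩ := mem_range_algebraMap_of_pow_natCard_eq (hK.symm ▸ hu)
  obtain ⟨v, rfl⟩ := mem_range_algebraMap_of_pow_natCard_eq (hK.symm ▸ hv)
  intro a ha
  obtain ⟨α, huα, hnorm⟩ := exists_norm_add_eq_dicksonQuotient hK hk4 hL hβ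
    (by simpa only [map_eq_zero] using huv) (by simpa only [Algebra.smul_def] using ha)
  rw [← hF, ← hK]
  exact isCompletePermutation_of_norm_add_eq_dicksonQuotient hsq hL huα hnorm
end
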